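/- Let Φ = {φ_a}_{a∈A} be a self-conformal IFS on ℝ^d with attractor X and coding map Π, let {A_b}_{b∈A} be a family of subsets of A each containing at least two elements, and suppose there is c₁ > 0 such that for every b ∈ A and all distinct a, a′ ∈ A_b, dist(φ_a(X), φ_{a′}(X)) ≥ c₁. For ω = (b_n)_{n≥1} ∈ A^ℕ let Σ_ω = {(a_n)_{n≥1} : a_n ∈ A_{b_n} for all n}, let X_ω = Π(Σ_ω), and let σ denote the left shift σ((b_n)_{n≥1}) = (b_{n+1})_{n≥1}. Then there exist M ∈ ℕ and D ≥ 1 such that for every ω = (b_n) ∈ A^ℕ, every r ∈ (0, c₁/2) and every x ∈ X_ω, there are (a_n)_{n≥1} ∈ Σ_ω and natural numbers N₁ < N₂ with: (1) N₂ − N₁ ≤ M; (2) r/D ≤ diam(φ_{a_1⋯a_{N_1}}(X_{σ^{N_1}ω})) ≤ D·r and r/D ≤ diam(φ_{a_1⋯a_{N_2}}(X_{σ^{N_2}ω})) ≤ D·r; (3) B(x,2r) ∩ X_ω ⊆ φ_{a_1⋯a_{N_1}}(X_{σ^{N_1}ω}); (4) φ_{a_1⋯a_{N_2}}(X_{σ^{N_2}ω})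 ⊆ B(x,r). -/

import Mathlib

noncomputable section
open MeasureTheory Metric Filter Topology

variable {E : Type*} [NormedAddCommGroup E] [NormedSpace ℝ E]

/-- `f` is a contraction with ratio `r ∈ (0,1)`. -/
def IsContractionWith (r : ℝ) (f : E → E) : Prop :=
  0 < r ∧ r < 1 ∧ ∀ x y, ‖f x - f y‖ ≤ r * ‖x - y‖

/-- `f` is a contracting similarity with ratio `r ∈ (0,1)`. -/
def IsSimilarityWith (r : ℝ) (f : E → E) : Prop :=
  0 < r ∧ r < 1 ∧ ∀ x y, ‖f x - f y‖ = r * ‖x - y‖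

/-- A self-conformal IFS. -/
def IsSelfConformalIFS {A : Type*} [Fintype A] (φ : A → E → E) : Prop :=
  2 ≤ Fintype.card A ∧
  (∀ a, ∃ r, IsContractionWith r (φ a)) ∧
  (∀ a, ContDiff ℝ 1 (φ a)) ∧
  (∀ a x, 0 < ‖fderiv ℝ (φ a) x‖ ∧ ∀ v, ‖fderiv ℝ (φ a) x v‖ = ‖fderiv ℝ (φ a) x‖ * ‖v‖) ∧
  (∃ H α₀ : ℝ, 0 < H ∧ 0 < α₀ ∧ ∀ a x y,
    |‖fderiv ℝ (φ a) x‖ - ‖fderiv ℝ (φ a) y‖| ≤ H * ‖x - y‖ ^ α₀) ∧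
  (∃ a₁ a₂ x₁ x₂, φ a₁ x₁ = x₁ ∧ φ a₂ x₂ = x₂ ∧ x₁ ≠ x₂)

/-- A self-similar IFS. -/
def IsSelfSimilarIFS {A : Type*} [Fintype A] (φ : A → E → E) : Prop :=
  2 ≤ Fintype.card A ∧
  (∀ a, ∃ r, IsSimilarityWith r (φ a)) ∧
  (∃ a₁ a₂ x₁ x₂, φ a₁ x₁ = x₁ ∧ φ a₂ x₂ = x₂ ∧ x₁ ≠ x₂)

/-- The IFS is affinely irreducible: no (nonempty) proper affine subspace is preserved. -/
def AffinelyIrreducible {A : Type*} (φ : A → E → E) : Prop :=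
  ¬ ∃ W : AffineSubspace ℝ E, (W : Set E).Nonempty ∧ W ≠ ⊤ ∧
      ∀ a, φ a '' (W : Set E) ⊆ (W : Set E)

/-- Closed `ε`-neighbourhood of an affine subspace. -/
def affNbhd (W : AffineSubspace ℝ E) (ε : ℝ) : Set E :=
  {y | Metric.infDist y (W : Set E) ≤ ε}

/-- topological support of a measure -/
def msupport [MeasurableSpace E] (μ : Measure E) : Set E :=
  {x | ∀ r : ℝ, 0 < r → 0 < μ (Metric.ball x r)}

/-- distance between two sets -/
def setDist (S T : Set E) : ℝ := sInf (Set.image2 dist S T)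

/-- map corresponding to a finite word (as a list) -/
def listMap {A : Type*} (φ : A → E → E) : List A → E → E
  | [] => id
  | a :: l => φ a ∘ listMap φ l

/-- map corresponding to the first `n` letters of an infinite word -/
def wordMap {A : Type*} (φ : A → E → E) : ℕ → (ℕ → A) → E → E
  | 0, _ => id
  | n + 1, a => φ (a 0) ∘ wordMap φ n (fun k => a (k + 1))

/-- set of `Ψ`-well-approximable vectors in `ℝ^d` -/
def WApprox (d : ℕ) (Ψ : ℕ → ℝ) : Set (EuclideanSpace ℝ (Fin d)) :=
  {x | {pq : (Fin d → ℤ) × ℕ | 0 < pq.2 ∧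
        ∀ i, |x i - (pq.1 i : ℝ) / (pq.2 : ℝ)| ≤ Ψ pq.2}.Infinite}

/-- set of singular vectors in `ℝ^d` -/
def Sing (d : ℕ) : Set (EuclideanSpace ℝ (Fin d)) :=
  {x | ∀ c : ℝ, 0 < c → ∃ T : ℝ, 0 < T ∧ ∀ t : ℝ, T ≤ t →
    ∃ q : ℕ, 0 < q ∧ (q : ℝ) < t ∧
      ∀ i, |(q : ℝ) * x i - round ((q : ℝ) * x i)| ≤ c * t ^ (-(1 : ℝ) / (d : ℝ))}
/-- The set of infinite words whose `n`-th letter lies in `Ab (b n)`. -/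
def cylSet {A : Type*} (Ab : A → Set A) (b : ℕ → A) : Set (ℕ → A) :=
  {a | ∀ n, a n ∈ Ab (b n)}

namespace ConfLemma

abbrev Eu (d : ℕ) := EuclideanSpace ℝ (Fin d)

/-- standard orthonormal basis -/
abbrev eb (d : ℕ) : OrthonormalBasis (Fin d) ℝ (Eu d) := EuclideanSpace.basisFun (Fin d) ℝ

/-- Frobenius inner product -/
def frob {d : ℕ} (A B : Eu d →L[ℝ] Eu d) : ℝ := ∑ i, inner ℝ (A (eb d i)) (B (eb d i))

/-- conformal linear map -/
def CL {d : ℕ} (F : Eu d →L[ℝ] Eu d) : Prop := 0 < ‖F‖ ∧ ∀ v, ‖F v‖ = ‖F‖ * ‖v‖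

/-- conformal map -/
def Conf {d : ℕ} (f : Eu d → Eu d) : Prop := ContDiff ℝ 1 f ∧ ∀ x, CL (fderiv ℝ f x)

variable {d : ℕ}

lemma CL.inner_eq {F : Eu d →L[ℝ] Eu d} (h : CL F) (u v : Eu d) :
    inner ℝ (F u) (F v) = ‖F‖ ^ 2 * inner ℝ u v := by
  rw [real_inner_eq_norm_add_mul_self_sub_norm_mul_self_sub_norm_mul_self_div_two,
    real_inner_eq_norm_add_mul_self_sub_norm_mul_self_sub_norm_mul_self_div_two u v, ← map_add,
    h.2, h.2, h.2]
  ring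

lemma CL.injective {F : Eu d →L[ℝ] Eu d} (h : CL F) : Function.Injective F := by
  rw [injective_iff_map_eq_zero]
  intro a ha
  have := h.2 a
  rw [ha, norm_zero] at this
  have h1 := h.1
  have : ‖a‖ = 0 := by
    rcases mul_eq_zero.1 this.symm with h | h
    · linarith
    · exact h
  simpa using this

lemma CL.exists_equiv {F : Eu d →L[ℝ] Eu d} (h : CL F) :
    ∃ e : Eu d ≃L[ℝ] Eu d, (e : Eu d →L[ℝ] Eu d) = F := by
  refine ⟨(LinearEquiv.ofInjectiveEndo (F : Eu d →ₗ[ℝ] Eu d) h.injective).toContinuousLinearEquiv, ?_⟩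
  ext v i
  rfl

lemma CL.abs_det {F : Eu d →L[ℝ] Eu d} (h : CL F) : |F.det| = ‖F‖ ^ d := by
  have h0 : ‖F‖ ≠ 0 := h.1.ne'
  let L : Eu d →ₗᵢ[ℝ] Eu d :=
    ⟨(‖F‖⁻¹) • (F : Eu d →ₗ[ℝ] Eu d), fun v => by
      simp [norm_smul, h.2 v]; field_simp⟩
  have hF : (F : Eu d →ₗ[ℝ] Eu d) = ‖F‖ • L.toLinearMap := by
    change _ = ‖F‖ • (‖F‖⁻¹ • (F : Eu d →ₗ[ℝ] Eu d))
    rw [smul_smul, mul_inv_cancel₀ h0, one_smul]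
  have hL : |LinearMap.det L.toLinearMap| = 1 := by
    rw [← LinearMap.normDet_eq_abs_det]
    exact LinearIsometry.normDet_eq_one _
  rw [ContinuousLinearMap.det, hF, LinearMap.det_smul, abs_mul, hL, mul_one, abs_pow, abs_norm,
    finrank_euclideanSpace_fin]

lemma CL.frob_comp {F : Eu d →L[ℝ] Eu d} (h : CL F) (T : Eu d →L[ℝ] Eu d) :
    frob F (T.comp F) = ‖F‖ ^ 2 * LinearMap.trace ℝ (Eu d) (T : Eu d →ₗ[ℝ] Eu d) := by
  have h0 : ‖F‖ ≠ 0 := h.1.ne'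
  let L : Eu d →ₗᵢ[ℝ] Eu d := 
    ⟨(‖F‖⁻¹) • (F : Eu d →ₗ[ℝ] Eu d), fun v => by
      simp [norm_smul, h.2 v]; field_simp⟩
  let e := L.toLinearIsometryEquiv rfl
  have hF : ∀ v, F v = ‖F‖ • e v := by
    intro v
    change F v = ‖F‖ • (‖F‖⁻¹ • F v)
    rw [smul_smul, mul_inv_cancel₀ h0, one_smul]
  rw [LinearMap.trace_eq_sum_inner _ ((eb d).map e), Finset.mul_sum]
  unfold frob
  refine Finset.sum_congr rfl fun i _ => ?_
  rw [ContinuousLinearMap.comp_apply, hF, map_smul, inner_smul_left, inner_smul_right]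
  simp
  ring

lemma frob_add_right (A B C : Eu d →L[ℝ] Eu d) : frob A (B + C) = frob A B + frob A C := by
  simp [frob, inner_add_right, Finset.sum_add_distrib]
lemma frob_sub_right (A B C : Eu d →L[ℝ] Eu d) : frob A (B - C) = frob A B - frob A C := by
  simp [frob, inner_sub_right, Finset.sum_sub_distrib]
lemma frob_smul_right (A B : Eu d →L[ℝ] Eu d) (c : ℝ) : frob A (c • B) = c * frob A B := by
  simp [frob, inner_smul_right, Finset.mul_sum]
lemma frob_comm (A B : Eu d →L[ℝ] Eu d) : frob A B = frob B A := by
  simp [frob, real_inner_comm]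
lemma frob_sub_left (A B C : Eu d →L[ℝ] Eu d) : frob (A - B) C = frob A C - frob B C := by
  rw [frob_comm, frob_sub_right, frob_comm C, frob_comm C]
lemma frob_smul_left (A B : Eu d →L[ℝ] Eu d) (c : ℝ) : frob (c • A) B = c * frob A B := by
  rw [frob_comm, frob_smul_right, frob_comm]

lemma CL.frob_self {F : Eu d →L[ℝ] Eu d} (h : CL F) : frob F F = d * ‖F‖ ^ 2 := by
  simp [frob, h.2]

/-- the gradient vector of a linear form -/
def gr (l : Eu d →L[ℝ] ℝ) : Eu d := ∑ i, l (eb d i) • eb d i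

lemma inner_gr (l : Eu d →L[ℝ] ℝ) (v : Eu d) : inner ℝ (gr l) v = l v := by
  conv_rhs => rw [← (eb d).sum_repr' v, map_sum]
  rw [gr, sum_inner]
  refine Finset.sum_congr rfl fun i _ => ?_
  rw [inner_smul_left, map_smul]
  simp [mul_comm]

lemma norm_gr_le (l : Eu d →L[ℝ] ℝ) : ‖gr l‖ ≤ ‖l‖ := by
  by_cases h : ‖gr l‖ = 0
  · rw [h]; positivity
  have h1 : ‖gr l‖ * ‖gr l‖ ≤ ‖l‖ * ‖gr l‖ := by
    rw [← real_inner_self_eq_norm_mul_norm, inner_gr]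
    exact (le_abs_self _).trans (l.le_opNorm _)
  exact le_of_mul_le_mul_right h1 (lt_of_le_of_ne (norm_nonneg _) (Ne.symm h))

lemma frob_smulRight (A : Eu d →L[ℝ] Eu d) (l : Eu d →L[ℝ] ℝ) (u : Eu d) :
    frob A (l.smulRight u) = inner ℝ (A (gr l)) u := by
  simp only [frob, gr, map_sum, map_smul, sum_inner, ContinuousLinearMap.smulRight_apply,
    inner_smul_left, inner_smul_right]
  rfl

lemma opNorm_sq_le_frob (A : Eu d →L[ℝ] Eu d) : ‖A‖ ^ 2 ≤ frob A A := by
  have h0 : 0 ≤ frob A A := Finset.sum_nonneg fun i _ => real_inner_self_nonneg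
  have : ‖A‖ ≤ √(frob A A) := by
    refine A.opNorm_le_bound (Real.sqrt_nonneg _) fun v => ?_
    conv_lhs => rw [← (eb d).sum_repr' v, map_sum]
    refine (norm_sum_le _ _).trans ?_
    have h1 : ∀ i ∈ Finset.univ, ‖A (inner ℝ (eb d i) v • eb d i)‖ ≤ ‖A (eb d i)‖ * |inner ℝ (eb d i) v| := by
      intro i _
      rw [map_smul, norm_smul, mul_comm]; rfl
    refine (Finset.sum_le_sum h1).trans ?_
    have h2 := Finset.sum_mul_sq_le_sq_mul_sq Finset.univ (fun i => ‖A (eb d i)‖) (fun i => |inner ℝ (eb d i) v|)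
    have h3 : ∑ i, |inner ℝ (eb d i) v| ^ 2 = ‖v‖ ^ 2 := by
      rw [← (eb d).sum_sq_norm_inner_right v]; rfl
    have h4 : ∑ i, ‖A (eb d i)‖ ^ 2 = frob A A := by
      simp only [frob, real_inner_self_eq_norm_sq]
    rw [h3, h4] at h2
    refine abs_le_of_sq_le_sq' ?_ (by positivity) |>.2
    rw [mul_pow, Real.sq_sqrt h0]
    exact h2
  calc ‖A‖ ^ 2 ≤ √(frob A A) ^ 2 := by gcongr
    _ = _ := Real.sq_sqrt h0

end ConfLemma

namespace ConfLemma
variable {d : ℕ}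

lemma frob_zero_right (A : Eu d →L[ℝ] Eu d) : frob A 0 = 0 := by simp [frob]

lemma continuous_frob {α : Type*} [TopologicalSpace α] {A B : α → Eu d →L[ℝ] Eu d}
    (hA : Continuous A) (hB : Continuous B) : Continuous fun x => frob (A x) (B x) := by
  unfold frob
  fun_prop

lemma Conf.continuous_fderiv {f : Eu d → Eu d} (hf : Conf f) : Continuous (fderiv ℝ f) :=
  hf.1.continuous_fderiv one_ne_zero

lemma Conf.differentiable {f : Eu d → Eu d} (hf : Conf f) : Differentiable ℝ f :=
  hf.1.differentiable one_ne_zero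

lemma integral_trace_eq_zero {V : Eu d → Eu d} (hV : ContDiff ℝ 1 V) (hc : HasCompactSupport V) :
    ∫ y, LinearMap.trace ℝ (Eu d) (fderiv ℝ V y : Eu d →ₗ[ℝ] Eu d) = 0 := by
  have hcont : Continuous (fderiv ℝ V) := hV.continuous_fderiv one_ne_zero
  have hIntg : ∀ i, Integrable fun y => inner ℝ (eb d i) (fderiv ℝ V y (eb d i)) := by
    intro i
    refine Continuous.integrable_of_hasCompactSupport (by fun_prop) ?_
    refine (hc.fderiv (𝕜 := ℝ)).mono ?_
    intro y hy
    simp only [Function.mem_support] at hy ⊢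
    intro h
    exact hy (by rw [h]; simp)
  simp_rw [LinearMap.trace_eq_sum_inner _ (eb d)]
  simp only [ContinuousLinearMap.coe_coe]
  rw [integral_finsetSum _ (fun i _ => hIntg i)]
  refine Finset.sum_eq_zero fun i _ => ?_
  have := integral_bilinear_fderiv_right_eq_neg_left_of_integrable (μ := (volume : Measure (Eu d)))
    (f := fun _ : Eu d => eb d i) (g := V) (v := eb d i) (B := innerSL ℝ) (by simp)
    (hIntg i) (Continuous.integrable_of_hasCompactSupport (by
      have := hV.continuous
      change Continuous fun y => inner ℝ (eb d i) (V y)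
      fun_prop) (hc.mono (by
        intro y hy
        simp only [Function.mem_support] at hy ⊢
        intro h
        exact hy (by rw [h]; simp)))) (by intros; fun_prop) (fun x _ => hV.differentiable one_ne_zero x)
  rw [fderiv_fun_const] at this
  simp only [Pi.zero_apply, ContinuousLinearMap.zero_apply, map_zero, integral_zero, neg_zero] at this
  exact this

lemma Conf.weak_local {f : Eu d → Eu d} (hf : Conf f) (hd : 2 ≤ d) (x₀ : Eu d) :
    ∃ U : Set (Eu d), IsOpen U ∧ x₀ ∈ U ∧ ∀ W : Eu d → Eu d, ContDiff ℝ 1 W → HasCompactSupport W →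
      tsupport W ⊆ U →
      ∫ x, ‖fderiv ℝ f x‖ ^ (d - 2) * frob (fderiv ℝ f x) (fderiv ℝ W x) = 0 := by
  have hder : ∀ x, ∃ e : Eu d ≃L[ℝ] Eu d, HasFDerivAt f (e : Eu d →L[ℝ] Eu d) x := by
    intro x
    obtain ⟨e, he⟩ := (hf.2 x).exists_equiv
    exact ⟨e, by rw [he]; exact (hf.differentiable x).hasFDerivAt⟩
  obtain ⟨e₀, he₀⟩ := hder x₀
  set φ := (hf.1.contDiffAt (x := x₀)).toOpenPartialHomeomorph f he₀ one_ne_zero with hφ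
  have hφf : ∀ x, φ x = f x := fun x => rfl
  refine ⟨φ.source, φ.open_source,
    (hf.1.contDiffAt (x := x₀)).mem_toOpenPartialHomeomorph_source he₀ one_ne_zero, ?_⟩
  intro W hW hWc hWs
  set K := f '' tsupport W with hK
  have hKc : IsCompact K := hWc.isCompact.image hf.1.continuous
  have hKt : K ⊆ φ.target := by
    rintro _ ⟨x, hx, rfl⟩
    exact φ.map_source (hWs hx)
  classical
  let V : Eu d → Eu d := fun y => if y ∈ φ.target then W (φ.symm y) else 0
  have hV0 : ∀ y, y ∉ K → V y = 0 := by
    intro y hy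
    simp only [V]
    split_ifs with h
    · refine image_eq_zero_of_notMem_tsupport fun h' => hy ⟨_, h', ?_⟩
      exact φ.right_inv h
    · rfl
  have hV0' : ∀ y, y ∉ K → V =ᶠ[𝓝 y] 0 := by
    intro y hy
    filter_upwards [hKc.isClosed.isOpen_compl.mem_nhds hy] with z hz
    exact hV0 z hz
  have hVC : ContDiff ℝ 1 V := by
    rw [contDiff_iff_contDiffAt]
    intro y
    by_cases hy : y ∈ φ.target
    · obtain ⟨e, he⟩ := hder (φ.symm y)
      have h1 : ContDiffAt ℝ 1 φ.symm y := φ.contDiffAt_symm hy he hf.1.contDiffAt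
      have h2 : ContDiffAt ℝ 1 (W ∘ φ.symm) y := hW.contDiffAt.comp y h1
      refine h2.congr_of_eventuallyEq ?_
      filter_upwards [φ.open_target.mem_nhds hy] with z hz
      simp [V, hz]
    · exact contDiffAt_const.congr_of_eventuallyEq (hV0' y fun h => hy (hKt h))
  have hVs : HasCompactSupport V := HasCompactSupport.intro hKc hV0
  have h1 := integral_trace_eq_zero hVC hVs
  have h2 : ∫ y in φ.target, LinearMap.trace ℝ (Eu d) (fderiv ℝ V y : Eu d →ₗ[ℝ] Eu d) = 0 := by
    rw [← h1]
    refine setIntegral_eq_integral_of_forall_compl_eq_zero fun y hy => ?_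
    rw [(hV0' y fun h => hy (hKt h)).fderiv_eq]
    simp
  rw [integral_target_eq_integral_abs_det_fderiv_smul volume (f := φ) (f' := fderiv ℝ f)
    (fun x _ => (hf.differentiable x).hasFDerivAt)] at h2
  rw [← h2, ← setIntegral_eq_integral_of_forall_compl_eq_zero (s := φ.source)]
  · refine setIntegral_congr_fun φ.open_source.measurableSet fun x hx => ?_
    have h3 : W =ᶠ[𝓝 x] V ∘ f := by
      filter_upwards [φ.open_source.mem_nhds hx] with z hz
      have : f z ∈ φ.target := φ.map_source hz
      simp only [Function.comp, V, this, if_true]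
      congr 1
      exact (φ.left_inv hz).symm
    have h4 : fderiv ℝ W x = (fderiv ℝ V (f x)).comp (fderiv ℝ f x) := by
      rw [h3.fderiv_eq, fderiv_comp x (hVC.differentiable one_ne_zero _) (hf.differentiable x)]
    simp only [hφf]
    rw [h4, (hf.2 x).frob_comp, (hf.2 x).abs_det, smul_eq_mul, ← mul_assoc, ← pow_add]
    congr 3
    omega
  · intro x hx
    have : fderiv ℝ W x = 0 := by
      refine image_eq_zero_of_notMem_tsupport fun h => hx (hWs ?_)
      exact tsupport_fderiv_subset ℝ h
    rw [this, frob_zero_right, mul_zero]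

open scoped Manifold ContDiff in
set_option maxHeartbeats 1000000 in
lemma exists_partition {W : Eu d → Eu d} (hWc : HasCompactSupport W) (U : Eu d → Set (Eu d))
    (hUo : ∀ x, IsOpen (U x)) (hUx : ∀ x, x ∈ U x) :
    ∃ (S : Finset (Eu d)) (ρ : Eu d → Eu d → ℝ), (∀ i, ContDiff ℝ 1 (ρ i)) ∧
      (∀ i, tsupport (ρ i) ⊆ U i) ∧ ∀ x ∈ tsupport W, ∑ i ∈ S, ρ i x = 1 := by
  obtain ⟨ρ, hρ⟩ := SmoothPartitionOfUnity.exists_isSubordinate 𝓘(ℝ, Eu d)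
    (isClosed_tsupport W) U hUo (fun x _ => Set.mem_iUnion.2 ⟨x, hUx x⟩)
  have hfin : Set.Finite {i | (Function.support (ρ i) ∩ tsupport W).Nonempty} :=
    ρ.locallyFinite.finite_nonempty_inter_compact hWc.isCompact
  refine ⟨hfin.toFinset, fun i => ρ i, ?_, hρ, ?_⟩
  · intro i
    have h1 : ContDiff ℝ ∞ (ρ i : Eu d → ℝ) := (ρ i).contMDiff.contDiff
    exact h1.of_le (by exact_mod_cast le_top)
  · intro x hx
    have h1 : ∑ᶠ i, ρ i x = 1 := ρ.sum_eq_one hx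
    rw [finsum_eq_sum_of_support_subset (s := hfin.toFinset)] at h1
    · exact h1
    · intro i hi
      simp only [Set.Finite.coe_toFinset]
      exact ⟨x, hi, hx⟩

end ConfLemma

namespace ConfLemma
variable {d : ℕ}

set_option maxHeartbeats 200000 in
lemma Conf.weak {f : Eu d → Eu d} (hf : Conf f) (hd : 2 ≤ d) {W : Eu d → Eu d}
    (hW : ContDiff ℝ 1 W) (hWc : HasCompactSupport W) :
    ∫ x, ‖fderiv ℝ f x‖ ^ (d - 2) * frob (fderiv ℝ f x) (fderiv ℝ W x) = 0 := by
  have hloc := hf.weak_local hd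
  obtain ⟨U, hU0⟩ := Classical.skolem.1 hloc
  have hUo := fun x => (hU0 x).1
  have hUx := fun x => (hU0 x).2.1
  have hU := fun x => (hU0 x).2.2
  obtain ⟨S, ρ, hρC, hρ, hsum⟩ := exists_partition hWc U hUo hUx
  have hWsum : W = fun x => ∑ i ∈ S, ρ i x • W x := by
    ext1 x
    by_cases hx : x ∈ tsupport W
    · rw [← Finset.sum_smul, hsum x hx, one_smul]
    · rw [image_eq_zero_of_notMem_tsupport hx]
      simp
  have hC : ∀ i, ContDiff ℝ 1 fun x => ρ i x • W x := fun i => (hρC i).smul hW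
  have hcs : ∀ i, HasCompactSupport fun x => ρ i x • W x := by
    intro i
    refine HasCompactSupport.intro hWc fun x hx => ?_
    rw [image_eq_zero_of_notMem_tsupport hx, smul_zero]
  have hder : ∀ x, fderiv ℝ W x = ∑ i ∈ S, fderiv ℝ (fun x => ρ i x • W x) x := by
    intro x
    conv_lhs => rw [hWsum]
    rw [fderiv_fun_sum]
    intro i _
    exact (hC i).differentiable one_ne_zero x
  have hterm : ∀ x, ‖fderiv ℝ f x‖ ^ (d - 2) * frob (fderiv ℝ f x) (fderiv ℝ W x) =
      ∑ i ∈ S, ‖fderiv ℝ f x‖ ^ (d - 2) *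
        frob (fderiv ℝ f x) (fderiv ℝ (fun x => ρ i x • W x) x) := by
    intro x
    rw [hder x, ← Finset.mul_sum]
    congr 1
    simp only [frob, ContinuousLinearMap.sum_apply, inner_sum]
    rw [Finset.sum_comm]
  simp_rw [hterm]
  have hcf := hf.continuous_fderiv
  rw [integral_finsetSum]
  · refine Finset.sum_eq_zero fun i _ => ?_
    have hsub : tsupport (fun x => ρ i x • W x) ⊆ U i :=
      Set.Subset.trans (tsupport_smul_subset_left (ρ i) W) (hρ i)
    exact hU i (fun x => ρ i x • W x) (hC i) (hcs i) hsub
  · intro i _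
    refine Continuous.integrable_of_hasCompactSupport ?_ ?_
    · exact (hcf.norm.pow _).mul (continuous_frob hcf ((hC i).continuous_fderiv one_ne_zero))
    · refine ((hcs i).fderiv (𝕜 := ℝ)).mono ?_
      intro y hy
      simp only [Function.mem_support] at hy ⊢
      intro h
      exact hy (by rw [h, frob_zero_right, mul_zero])

end ConfLemma

namespace ConfLemma
variable {d : ℕ}

/-- The weighted derivative. -/
def cof (f : Eu d → Eu d) (x : Eu d) : Eu d →L[ℝ] Eu d :=
  ‖fderiv ℝ f x‖ ^ (d - 2) • fderiv ℝ f x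

lemma Conf.continuous_cof {f : Eu d → Eu d} (hf : Conf f) : Continuous (cof f) := by
  have := hf.continuous_fderiv
  unfold cof
  fun_prop

lemma Conf.weak' {f : Eu d → Eu d} (hf : Conf f) (hd : 2 ≤ d) {W : Eu d → Eu d}
    (hW : ContDiff ℝ 1 W) (hWc : HasCompactSupport W) :
    ∫ x, frob (cof f x) (fderiv ℝ W x) = 0 := by
  rw [← hf.weak hd hW hWc]
  simp only [cof, frob_smul_left]

lemma integrable_of_zero {X : Type*} [NormedAddCommGroup X] {F : Eu d → X}
    {ζ : Eu d → ℝ} (hF : Continuous F) (hζ : HasCompactSupport ζ)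
    (h0 : ∀ x, x ∉ tsupport ζ → F x = 0) : Integrable F :=
  hF.integrable_of_hasCompactSupport (HasCompactSupport.intro hζ h0)

lemma fderiv_zero_of {X : Type*} [NormedAddCommGroup X] [NormedSpace ℝ X] {ζ : Eu d → X}
    {x : Eu d} (hx : x ∉ tsupport ζ) : fderiv ℝ ζ x = 0 :=
  image_eq_zero_of_notMem_tsupport fun h => hx (tsupport_fderiv_subset ℝ h)

lemma gr_zero : gr (0 : Eu d →L[ℝ] ℝ) = 0 := by simp [gr]

lemma continuous_gr {α : Type*} [TopologicalSpace α] {l : α → Eu d →L[ℝ] ℝ} (hl : Continuous l) :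
    Continuous fun x => gr (l x) := by
  unfold gr
  fun_prop

lemma frob_fderiv_smul (A : Eu d →L[ℝ] Eu d) {ζ : Eu d → ℝ} {u : Eu d → Eu d} {x : Eu d}
    (hζ : DifferentiableAt ℝ ζ x) (hu : DifferentiableAt ℝ u x) :
    frob A (fderiv ℝ (fun x => ζ x • u x) x) =
      ζ x * frob A (fderiv ℝ u x) + inner ℝ (A (gr (fderiv ℝ ζ x))) (u x) := by
  rw [fderiv_fun_smul hζ hu, frob_add_right, frob_smul_right, frob_smulRight]

/-- weak identity tested against `ζ • u` -/
lemma Conf.weak_smul {f : Eu d → Eu d} (hf : Conf f) (hd : 2 ≤ d) {ζ : Eu d → ℝ} {u : Eu d → Eu d}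
    (hζ : ContDiff ℝ 1 ζ) (hζc : HasCompactSupport ζ) (hu : ContDiff ℝ 1 u) :
    ∫ x, ζ x * frob (cof f x) (fderiv ℝ u x) =
      - ∫ x, inner ℝ (cof f x (gr (fderiv ℝ ζ x))) (u x) := by
  have hW : ContDiff ℝ 1 fun x => ζ x • u x := hζ.smul hu
  have hWc : HasCompactSupport fun x => ζ x • u x :=
    HasCompactSupport.intro hζc fun x hx => by
      rw [image_eq_zero_of_notMem_tsupport hx, zero_smul]
  have h := hf.weak' hd hW hWc
  simp_rw [fun x => frob_fderiv_smul (cof f x) (hζ.differentiable one_ne_zero x)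
    (hu.differentiable one_ne_zero x)] at h
  have c1 := hf.continuous_cof
  have c2 := hζ.continuous_fderiv one_ne_zero
  have c3 := hu.continuous_fderiv one_ne_zero
  rw [integral_add] at h
  · linarith
  · exact integrable_of_zero (hζ.continuous.mul (continuous_frob c1 c3)) hζc fun x hx => by
      rw [image_eq_zero_of_notMem_tsupport hx, zero_mul]
  · exact integrable_of_zero ((c1.clm_apply (continuous_gr c2)).inner hu.continuous) hζc
      fun x hx => by rw [fderiv_zero_of hx, gr_zero, map_zero, inner_zero_left]

lemma diff_identity {f g : Eu d → Eu d} (hf : Conf f) (hg : Conf g) (hd : 2 ≤ d) {ζ : Eu d → ℝ}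
    (hζ : ContDiff ℝ 1 ζ) (hζc : HasCompactSupport ζ) :
    ∫ x, ζ x * frob (cof g x - cof f x) (fderiv ℝ g x - fderiv ℝ f x) =
      - ∫ x, inner ℝ ((cof g x - cof f x) (gr (fderiv ℝ ζ x))) (g x - f x) := by
  have hu : ContDiff ℝ 1 fun x => g x - f x := hg.1.sub hf.1
  have h1 := hf.weak_smul hd hζ hζc hu
  have h2 := hg.weak_smul hd hζ hζc hu
  have hD : ∀ x, fderiv ℝ (fun x => g x - f x) x = fderiv ℝ g x - fderiv ℝ f x := fun x =>
    fderiv_fun_sub (hg.differentiable x) (hf.differentiable x)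
  simp_rw [hD] at h1 h2
  have c1 := hf.continuous_cof
  have c1' := hg.continuous_cof
  have c2 := hζ.continuous_fderiv one_ne_zero
  have c3 := hg.continuous_fderiv.sub hf.continuous_fderiv
  simp only [frob_sub_left, sub_apply, inner_sub_left, mul_sub] 
  rw [integral_sub, integral_sub, h1, h2]
  · ring
  · exact integrable_of_zero ((c1'.clm_apply (continuous_gr c2)).inner hu.continuous) hζc
      fun x hx => by rw [fderiv_zero_of hx, gr_zero, map_zero, inner_zero_left]
  · exact integrable_of_zero ((c1.clm_apply (continuous_gr c2)).inner hu.continuous) hζc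
      fun x hx => by rw [fderiv_zero_of hx, gr_zero, map_zero, inner_zero_left]
  · exact integrable_of_zero (hζ.continuous.mul (continuous_frob c1' c3)) hζc fun x hx => by
      rw [image_eq_zero_of_notMem_tsupport hx, zero_mul]
  · exact integrable_of_zero (hζ.continuous.mul (continuous_frob c1 c3)) hζc fun x hx => by
      rw [image_eq_zero_of_notMem_tsupport hx, zero_mul]

lemma pow_mono_prod {a b : ℝ} (ha : 0 ≤ a) (hb : 0 ≤ b) (p q : ℕ) :
    0 ≤ (a ^ p - b ^ p) * (a ^ q - b ^ q) := by
  rcases le_total a b with h | h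
  · exact mul_nonneg_of_nonpos_of_nonpos (sub_nonpos.2 (pow_le_pow_left₀ ha h p))
      (sub_nonpos.2 (pow_le_pow_left₀ ha h q))
  · exact mul_nonneg (sub_nonneg.2 (pow_le_pow_left₀ hb h p))
      (sub_nonneg.2 (pow_le_pow_left₀ hb h q))

lemma Q_lower {F G : Eu d →L[ℝ] Eu d} (hF : CL F) (hG : CL G) (p : ℕ) {m : ℝ} (hm0 : 0 ≤ m)
    (hmF : m ≤ ‖F‖ ^ p) (hmG : m ≤ ‖G‖ ^ p) :
    m * ‖G - F‖ ^ 2 ≤ frob (‖G‖ ^ p • G - ‖F‖ ^ p • F) (G - F) := by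
  have h1 := opNorm_sq_le_frob (G - F)
  have h2 := hF.frob_self
  have h3 := hG.frob_self
  have h4 := pow_mono_prod hG.1.le hF.1.le p 2
  have h6 : frob (‖G‖ ^ p • G - ‖F‖ ^ p • F) (G - F) =
     1 / 2 * (‖G‖ ^ p + ‖F‖ ^ p) * frob (G - F) (G - F)
      + 1 / 2 * ((‖G‖ ^ p - ‖F‖ ^ p) * (d * (‖G‖ ^ 2 - ‖F‖ ^ 2))) := by
    simp only [frob_sub_left, frob_sub_right, frob_smul_left, h2, h3, frob_comm G F]
    ring
  rw [h6]
  have h7 : 0 ≤ 1 / 2 * ((‖G‖ ^ p - ‖F‖ ^ p) * (d * (‖G‖ ^ 2 - ‖F‖ ^ 2))) := by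
    have : (0:ℝ) ≤ d := Nat.cast_nonneg d
    nlinarith [mul_nonneg this h4]
  have h8 : m * ‖G - F‖ ^ 2 ≤ 1 / 2 * (‖G‖ ^ p + ‖F‖ ^ p) * frob (G - F) (G - F) :=
    mul_le_mul (by linarith) h1 (by positivity) (by positivity)
  linarith

lemma pow_sub_le {a b : ℝ} (ha : 0 ≤ a) (hb : 0 ≤ b) (ha1 : a ≤ 1) (hb1 : b ≤ 1) (p : ℕ) :
    |a ^ p - b ^ p| ≤ p * |a - b| := by
  have h := abs_pow_sub_pow_le a b p
  have h2 : max |a| |b| ^ (p - 1) ≤ 1 := by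
    apply pow_le_one₀ (by positivity)
    rw [abs_of_nonneg ha, abs_of_nonneg hb]
    exact max_le ha1 hb1
  have h3 : 0 ≤ |a - b| * p := by positivity
  nlinarith

lemma cof_diff_le {F G : Eu d →L[ℝ] Eu d} (p : ℕ) (hF : ‖F‖ ≤ 1) (hG : ‖G‖ ≤ 1) :
    ‖‖G‖ ^ p • G - ‖F‖ ^ p • F‖ ≤ (1 + p) * ‖G - F‖ := by
  have h1 : ‖G‖ ^ p • G - ‖F‖ ^ p • F = (‖G‖ ^ p) • (G - F) + (‖G‖ ^ p - ‖F‖ ^ p) • F := by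
    module
  rw [h1]
  refine (norm_add_le _ _).trans ?_
  rw [norm_smul, norm_smul, Real.norm_eq_abs, Real.norm_eq_abs, abs_of_nonneg (by positivity)]
  have h2 := pow_sub_le (norm_nonneg G) (norm_nonneg F) hG hF p
  have h3 := abs_norm_sub_norm_le G F
  have h4 : ‖G‖ ^ p ≤ 1 := pow_le_one₀ (norm_nonneg _) hG
  have h5 : |‖G‖ ^ p - ‖F‖ ^ p| ≤ p * ‖G - F‖ := h2.trans (by gcongr)
  have h6 : |‖G‖ ^ p - ‖F‖ ^ p| * ‖F‖ ≤ (p * ‖G - F‖) * 1 :=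
    mul_le_mul h5 hF (norm_nonneg _) (by positivity)
  nlinarith [norm_nonneg (G - F)]

set_option maxHeartbeats 400000 in
lemma caccioppoli {f g : Eu d → Eu d} (hf : Conf f) (hg : Conf g) (hd : 2 ≤ d)
    (hf1 : ∀ x, ‖fderiv ℝ f x‖ ≤ 1) (hg1 : ∀ x, ‖fderiv ℝ g x‖ ≤ 1) {χ : Eu d → ℝ}
    (hχ : ContDiff ℝ 1 χ) (hχc : HasCompactSupport χ) {m s : ℝ} (hm : 0 < m)
    (hmf : ∀ x ∈ tsupport χ, m ≤ ‖fderiv ℝ f x‖ ^ (d - 2))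
    (hmg : ∀ x ∈ tsupport χ, m ≤ ‖fderiv ℝ g x‖ ^ (d - 2))
    (hs : ∀ x, ‖g x - f x‖ ≤ s) :
    ∫ x, χ x ^ 2 * ‖fderiv ℝ g x - fderiv ℝ f x‖ ^ 2 ≤
      (4 * (1 + (d - 2 : ℕ)) ^ 2 / m ^ 2 * ∫ x, ‖fderiv ℝ χ x‖ ^ 2) * s ^ 2 := by
  set P : ℝ := 1 + (d - 2 : ℕ) with hP
  have hP0 : 0 ≤ P := by positivity
  have hs0 : 0 ≤ s := (norm_nonneg _).trans (hs 0)
  have hζ : ContDiff ℝ 1 fun x => χ x ^ 2 := hχ.pow 2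
  have hζc : HasCompactSupport fun x => χ x ^ 2 :=
    HasCompactSupport.intro hχc fun x hx => by
      rw [image_eq_zero_of_notMem_tsupport hx]; norm_num
  have hid := diff_identity hf hg hd hζ hζc
  have c1 := hf.continuous_cof
  have c1' := hg.continuous_cof
  have c2 := hχ.continuous_fderiv one_ne_zero
  have c3 := hg.continuous_fderiv.sub hf.continuous_fderiv
  have c4 := hχ.continuous
  have i1 : Integrable fun x => χ x ^ 2 * ‖fderiv ℝ g x - fderiv ℝ f x‖ ^ 2 :=
    integrable_of_zero ((c4.pow 2).mul (c3.norm.pow 2)) hχc fun x hx => by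
      rw [image_eq_zero_of_notMem_tsupport hx]; norm_num
  have i2 : Integrable fun x => ‖fderiv ℝ χ x‖ ^ 2 :=
    integrable_of_zero (c2.norm.pow 2) hχc fun x hx => by
      rw [fderiv_zero_of hx]; norm_num
  have i3 : Integrable fun x => χ x ^ 2 * frob (cof g x - cof f x) (fderiv ℝ g x - fderiv ℝ f x) :=
    integrable_of_zero ((c4.pow 2).mul (continuous_frob (c1'.sub c1) c3)) hχc fun x hx => by
      rw [image_eq_zero_of_notMem_tsupport hx]; norm_num
  have hD : ∀ x, fderiv ℝ (fun x => χ x ^ 2) x = (2 * χ x) • fderiv ℝ χ x := by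
    intro x
    have := ((hχ.differentiable one_ne_zero x).hasFDerivAt.pow 2).fderiv
    rw [this]; simp
  have h1 : m * ∫ x, χ x ^ 2 * ‖fderiv ℝ g x - fderiv ℝ f x‖ ^ 2 ≤
      ∫ x, χ x ^ 2 * frob (cof g x - cof f x) (fderiv ℝ g x - fderiv ℝ f x) := by
    rw [← integral_const_mul]
    refine integral_mono (i1.const_mul m) i3 fun x => ?_
    by_cases hx : x ∈ tsupport χ
    · have := Q_lower (hf.2 x) (hg.2 x) (d - 2) hm.le (hmf x hx) (hmg x hx)
      have h2 := mul_le_mul_of_nonneg_left this (sq_nonneg (χ x))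
      simp only [cof]
      linarith
    · simp [image_eq_zero_of_notMem_tsupport hx]
  have h2 : - ∫ x, inner ℝ ((cof g x - cof f x) (gr (fderiv ℝ (fun x => χ x ^ 2) x))) (g x - f x) ≤
      ∫ x, (m / 2 * (χ x ^ 2 * ‖fderiv ℝ g x - fderiv ℝ f x‖ ^ 2) +
        2 * P ^ 2 / m * s ^ 2 * ‖fderiv ℝ χ x‖ ^ 2) := by
    rw [← integral_neg]
    refine integral_mono ?_ ((i1.const_mul _).add (i2.const_mul _)) fun x => ?_
    · refine Integrable.neg ?_
      refine integrable_of_zero (((c1'.sub c1).clm_apply (continuous_gr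
        (hζ.continuous_fderiv one_ne_zero))).inner (hg.1.continuous.sub hf.1.continuous)) hχc
        fun x hx => ?_
      rw [hD, fderiv_zero_of hx, smul_zero, gr_zero, map_zero, inner_zero_left]
    · have e1 := cof_diff_le (d - 2) (hf1 x) (hg1 x)
      have e2 : ‖gr (fderiv ℝ (fun x => χ x ^ 2) x)‖ ≤ 2 * |χ x| * ‖fderiv ℝ χ x‖ := by
        refine (norm_gr_le _).trans ?_
        rw [hD, norm_smul, Real.norm_eq_abs, abs_mul, abs_two]
      have e3 := abs_real_inner_le_norm ((cof g x - cof f x) (gr (fderiv ℝ (fun x => χ x ^ 2) x)))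
        (g x - f x)
      set w := gr (fderiv ℝ (fun x => χ x ^ 2) x)
      set T := cof g x - cof f x with hT
      set N := ‖fderiv ℝ g x - fderiv ℝ f x‖ with hN
      set k := ‖fderiv ℝ χ x‖
      have e4 : ‖T‖ ≤ P * N := e1
      have e5 : ‖T w‖ * ‖g x - f x‖ ≤ (P * N) * (2 * |χ x| * k) * s := by
        refine mul_le_mul ?_ (hs x) (norm_nonneg _) (by positivity)
        exact (T.le_opNorm w).trans (mul_le_mul e4 e2 (norm_nonneg _) (by positivity))
      have e6 : (P * N) * (2 * |χ x| * k) * s ≤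
          m / 2 * (χ x ^ 2 * N ^ 2) + 2 * P ^ 2 / m * s ^ 2 * k ^ 2 := by
        have : 0 ≤ (m * (|χ x| * N) - 2 * P * s * k) ^ 2 / (2 * m) := by positivity
        have e7 : (m * (|χ x| * N) - 2 * P * s * k) ^ 2 / (2 * m) =
          m / 2 * (|χ x| ^ 2 * N ^ 2) + 2 * P ^ 2 / m * s ^ 2 * k ^ 2 -
            (P * N) * (2 * |χ x| * k) * s := by
          field_simp; ring
        rw [sq_abs] at e7
        linarith
      have := neg_abs_le (inner ℝ (T w) (g x - f x))
      linarith
  rw [integral_add (i1.const_mul _) (i2.const_mul _), integral_const_mul, integral_const_mul] at h2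
  set I := ∫ x, χ x ^ 2 * ‖fderiv ℝ g x - fderiv ℝ f x‖ ^ 2
  set J := ∫ x, ‖fderiv ℝ χ x‖ ^ 2
  have h3 : m / 2 * I ≤ 2 * P ^ 2 / m * s ^ 2 * J := by linarith
  have h4 : I = (2 / m) * (m / 2 * I) := by field_simp
  rw [h4]
  calc (2 / m) * (m / 2 * I) ≤ (2 / m) * (2 * P ^ 2 / m * s ^ 2 * J) := by gcongr
    _ = _ := by field_simp; ring

end ConfLemma

namespace ConfLemma
variable {d : ℕ}

lemma taylor_pow {a b : ℝ} (ha : 0 ≤ a) (hb : 0 ≤ b) (ha1 : a ≤ 1) (hb1 : b ≤ 1) (p : ℕ) :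
    |a ^ p - b ^ p - p * b ^ (p - 1) * (a - b)| ≤ p ^ 2 * (a - b) ^ 2 := by
  induction p with
  | zero => simp
  | succ p ih =>
    have e : a ^ (p + 1) - b ^ (p + 1) - ((p + 1 : ℕ) : ℝ) * b ^ (p + 1 - 1) * (a - b) =
        a * (a ^ p - b ^ p - p * b ^ (p - 1) * (a - b)) + p * b ^ (p - 1) * (a - b) ^ 2 := by
      rcases p with _ | p
      · simp
      · simp only [Nat.add_sub_cancel]
        push_cast
        ring
    rw [e]
    refine (abs_add_le _ _).trans ?_
    have h1 : |a * (a ^ p - b ^ p - p * b ^ (p - 1) * (a - b))| ≤ 1 * (p ^ 2 * (a - b) ^ 2) := by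
      rw [abs_mul, abs_of_nonneg ha]
      exact mul_le_mul ha1 ih (abs_nonneg _) zero_le_one
    have h2 : |p * b ^ (p - 1) * (a - b) ^ 2| ≤ p * (a - b) ^ 2 := by
      rw [abs_of_nonneg (by positivity)]
      have : b ^ (p - 1) ≤ 1 := pow_le_one₀ hb hb1
      have h3 : 0 ≤ (p:ℝ) * (a - b) ^ 2 := by positivity
      nlinarith
    push_cast
    nlinarith [sq_nonneg (a - b), (Nat.cast_nonneg p : (0:ℝ) ≤ p)]

lemma pow_combo {a b : ℝ} (ha : 0 ≤ a) (hb : 0 ≤ b) (ha1 : a ≤ 1) (hb1 : b ≤ 1) (p : ℕ) :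
    |(a ^ p - b ^ p) * b ^ 2 - p / (p + 2) * (a ^ (p + 2) - b ^ (p + 2))| ≤
      (p ^ 2 + p * (p + 2)) * (a - b) ^ 2 := by
  have h1 := taylor_pow ha hb ha1 hb1 p
  have h2 := taylor_pow ha hb ha1 hb1 (p + 2)
  set X := a ^ p - b ^ p - p * b ^ (p - 1) * (a - b) with hX
  set Y := a ^ (p + 2) - b ^ (p + 2) - ((p + 2 : ℕ) : ℝ) * b ^ (p + 2 - 1) * (a - b) with hY
  have e : (a ^ p - b ^ p) * b ^ 2 - p / (p + 2) * (a ^ (p + 2) - b ^ (p + 2)) =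
      b ^ 2 * X - p / (p + 2) * Y := by
    rw [hX, hY]
    rcases p with _ | p
    · simp
    · simp only [Nat.add_sub_cancel]
      have : p + 1 + 2 - 1 = p + 2 := by omega
      rw [this]
      push_cast
      field_simp
      ring
  rw [e]
  refine (abs_sub _ _).trans ?_
  rw [abs_mul, abs_mul, abs_of_nonneg (sq_nonneg b), abs_of_nonneg (by positivity : (0:ℝ) ≤ p / (p + 2))]
  have h3 : b ^ 2 * |X| ≤ 1 * (p ^ 2 * (a - b) ^ 2) :=
    mul_le_mul (pow_le_one₀ hb hb1) h1 (abs_nonneg _) zero_le_one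
  have h4 : (p:ℝ) / (p + 2) * |Y| ≤ p / (p + 2) * (((p + 2 : ℕ):ℝ) ^ 2 * (a - b) ^ 2) := by gcongr
  have h5 : (p:ℝ) / (p + 2) * (((p + 2 : ℕ):ℝ) ^ 2 * (a - b) ^ 2) = p * (p + 2) * (a - b) ^ 2 := by
    push_cast
    field_simp
  linarith

/-- constant appearing in the pointwise estimate -/
def cst (p : ℕ) : ℝ := 3 * p + (p ^ 2 + p * (p + 2))

lemma cst_nonneg (p : ℕ) : 0 ≤ cst p := by unfold cst; positivity

lemma pointwise_est {F G : Eu d →L[ℝ] Eu d} (hF : CL F) (p : ℕ) (hF1 : ‖F‖ ≤ 1)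
    (hG1 : ‖G‖ ≤ 1) {U e w : Eu d} (he : ‖e‖ = 1) {ε : ℝ} (hU : ‖U‖ ≤ 1) (hUF : ‖U - F e‖ ≤ ε)
    (hGF : ‖G - F‖ ≤ ε) :
    |inner ℝ ((‖G‖ ^ p • G - ‖F‖ ^ p • F) w) U - ‖U‖ ^ p * inner ℝ ((G - F) w) U
      - p / (p + 2) * (‖G‖ ^ (p + 2) - ‖F‖ ^ (p + 2)) * inner ℝ e w| ≤
    cst p * (ε * ‖G - F‖ * ‖w‖) := by
  set K := ‖G - F‖ with hK
  have hK0 : 0 ≤ K := norm_nonneg _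
  have hε : 0 ≤ ε := hK0.trans hGF
  have hw0 : 0 ≤ ‖w‖ := norm_nonneg w
  have hFe : ‖F e‖ = ‖F‖ := by rw [hF.2, he, mul_one]
  have hlam : |‖F‖ - ‖U‖| ≤ ε := by
    rw [← hFe, abs_sub_comm]
    exact (abs_norm_sub_norm_le U (F e)).trans hUF
  have hγ : |‖G‖ - ‖F‖| ≤ K := abs_norm_sub_norm_le G F
  -- three errors
  have t1 : |(‖F‖ ^ p - ‖U‖ ^ p) * inner ℝ ((G - F) w) U| ≤ p * (ε * K * ‖w‖) := by
    rw [abs_mul]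
    have a1 : |‖F‖ ^ p - ‖U‖ ^ p| ≤ p * ε :=
      (pow_sub_le (norm_nonneg F) (norm_nonneg U) hF1 hU p).trans (by gcongr)
    have a2 : |inner ℝ ((G - F) w) U| ≤ K * ‖w‖ := by
      refine (abs_real_inner_le_norm _ _).trans ?_
      have := (G - F).le_opNorm w
      calc ‖(G - F) w‖ * ‖U‖ ≤ (K * ‖w‖) * 1 := mul_le_mul this hU (norm_nonneg _) (by positivity)
        _ = _ := mul_one _
    calc _ ≤ (p * ε) * (K * ‖w‖) := mul_le_mul a1 a2 (abs_nonneg _) (by positivity)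
      _ = _ := by ring
  have hpK : |‖G‖ ^ p - ‖F‖ ^ p| ≤ p * K :=
    (pow_sub_le (norm_nonneg G) (norm_nonneg F) hG1 hF1 p).trans (by gcongr)
  have t2 : |(‖G‖ ^ p - ‖F‖ ^ p) * (inner ℝ (G w) U - ‖F‖ ^ 2 * inner ℝ e w)| ≤
      2 * p * (ε * K * ‖w‖) := by
    rw [abs_mul]
    have a2 : |inner ℝ (G w) U - ‖F‖ ^ 2 * inner ℝ e w| ≤ 2 * ε * ‖w‖ := by
      have e1 : inner ℝ (G w) U - ‖F‖ ^ 2 * inner ℝ e w =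
          inner ℝ ((G - F) w) U + inner ℝ (F w) (U - F e) := by
        rw [inner_sub_right, hF.inner_eq w e, real_inner_comm e w]
        simp only [sub_apply, inner_sub_left]
        ring
      rw [e1]
      refine (abs_add_le _ _).trans ?_
      have b1 : |inner ℝ ((G - F) w) U| ≤ ε * ‖w‖ := by
        refine (abs_real_inner_le_norm _ _).trans ?_
        have := (G - F).le_of_opNorm_le hGF w
        calc ‖(G - F) w‖ * ‖U‖ ≤ (ε * ‖w‖) * 1 := mul_le_mul this hU (norm_nonneg _) (by positivity)
          _ = _ := mul_one _
      have b2 : |inner ℝ (F w) (U - F e)| ≤ ‖w‖ * ε := by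
        refine (abs_real_inner_le_norm _ _).trans ?_
        have : ‖F w‖ ≤ 1 * ‖w‖ := F.le_of_opNorm_le hF1 w
        rw [one_mul] at this
        exact mul_le_mul this hUF (norm_nonneg _) hw0
      linarith
    calc _ ≤ (p * K) * (2 * ε * ‖w‖) := mul_le_mul hpK a2 (abs_nonneg _) (by positivity)
      _ = _ := by ring
  have t3 : |((‖G‖ ^ p - ‖F‖ ^ p) * ‖F‖ ^ 2 - p / (p + 2) * (‖G‖ ^ (p + 2) - ‖F‖ ^ (p + 2))) *
      inner ℝ e w| ≤ (p ^ 2 + p * (p + 2)) * (ε * K * ‖w‖) := by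
    rw [abs_mul]
    have a1 := pow_combo (norm_nonneg G) (norm_nonneg F) hG1 hF1 p
    have a2 : (‖G‖ - ‖F‖) ^ 2 ≤ ε * K := by
      rw [← sq_abs, sq]
      exact mul_le_mul (hγ.trans hGF) hγ (abs_nonneg _) hε
    have a3 : |inner ℝ e w| ≤ ‖w‖ := by
      have := abs_real_inner_le_norm e w
      rwa [he, one_mul] at this
    calc _ ≤ ((p ^ 2 + p * (p + 2)) * (ε * K)) * ‖w‖ :=
          mul_le_mul (a1.trans (by gcongr)) a3 (abs_nonneg _) (by positivity)
      _ = _ := by ring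
  have key : inner ℝ ((‖G‖ ^ p • G - ‖F‖ ^ p • F) w) U - ‖U‖ ^ p * inner ℝ ((G - F) w) U
      - p / (p + 2) * (‖G‖ ^ (p + 2) - ‖F‖ ^ (p + 2)) * inner ℝ e w =
      (‖F‖ ^ p - ‖U‖ ^ p) * inner ℝ ((G - F) w) U +
      (‖G‖ ^ p - ‖F‖ ^ p) * (inner ℝ (G w) U - ‖F‖ ^ 2 * inner ℝ e w) +
      ((‖G‖ ^ p - ‖F‖ ^ p) * ‖F‖ ^ 2 - p / (p + 2) * (‖G‖ ^ (p + 2) - ‖F‖ ^ (p + 2))) *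
      inner ℝ e w := by
    simp only [sub_apply, smul_apply, inner_sub_left, inner_smul_left, RCLike.conj_to_real]
    ring
  rw [key]
  refine (abs_add_three _ _ _).trans ?_
  unfold cst
  linarith

lemma conf_shift {f : Eu d → Eu d} (hf : Conf f) (v : Eu d) : Conf fun x => f (x + v) := by
  refine ⟨hf.1.comp (contDiff_id.add contDiff_const), fun x => ?_⟩
  rw [fderiv_comp_add_right]
  exact hf.2 _

lemma lip_of_fderiv {f : Eu d → Eu d} (hf : Differentiable ℝ f) {C : ℝ}
    (h1 : ∀ x, ‖fderiv ℝ f x‖ ≤ C) (x y : Eu d) : ‖f x - f y‖ ≤ C * ‖x - y‖ :=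
  convex_univ.norm_image_sub_le_of_norm_fderiv_le (fun x _ => hf x) (fun x _ => h1 x)
    (Set.mem_univ _) (Set.mem_univ _)

/-- uniform modulus on a compact set -/
lemma unif_mod {f : Eu d → Eu d} (hf : Conf f) {K : Set (Eu d)} (hK : IsCompact K) {ε : ℝ}
    (hε : 0 < ε) : ∃ δ > 0, ∀ s : ℝ, 0 < s → s < δ → ∀ e : Eu d, ‖e‖ = 1 → ∀ x ∈ K,
      ‖fderiv ℝ f (x + s • e) - fderiv ℝ f x‖ ≤ ε ∧
      ‖s⁻¹ • (f (x + s • e) - f x) - fderiv ℝ f x e‖ ≤ ε := by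
  have hu := hK.uniformContinuousAt_of_continuousAt (fderiv ℝ f)
    (fun x _ => hf.continuous_fderiv.continuousAt) (Metric.dist_mem_uniformity hε)
  obtain ⟨δ, hδ, h⟩ := Metric.mem_uniformity_dist.1 hu
  have h' : ∀ x ∈ K, ∀ y, dist x y < δ → ‖fderiv ℝ f y - fderiv ℝ f x‖ ≤ ε := by
    intro x hx y hxy
    have := h hxy hx
    simp only [Set.mem_setOf_eq] at this
    rw [dist_comm, dist_eq_norm] at this
    exact this.le
  refine ⟨δ, hδ, fun s hs hsδ e he x hx => ?_⟩
  have hd : dist x (x + s • e) < δ := by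
    rw [dist_self_add_right, norm_smul, he, mul_one, Real.norm_of_nonneg hs.le]
    exact hsδ
  refine ⟨h' x hx _ hd, ?_⟩
  have h2 := (convex_ball x δ).norm_image_sub_le_of_norm_hasFDerivWithin_le' (f := f)
    (f' := fderiv ℝ f) (φ := fderiv ℝ f x) (C := ε)
    (fun y _ => (hf.differentiable y).hasFDerivAt.hasFDerivWithinAt)
    (fun y hy => h' x hx y (by rw [dist_comm]; exact hy)) (mem_ball_self hδ)
    (show x + s • e ∈ ball x δ by rw [mem_ball, dist_comm]; exact hd)
  have e1 : s⁻¹ • (f (x + s • e) - f x) - fderiv ℝ f x e =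
      s⁻¹ • (f (x + s • e) - f x - fderiv ℝ f x (x + s • e - x)) := by
    rw [add_sub_cancel_left, map_smul, smul_sub s⁻¹ (f (x + s • e) - f x), smul_smul,
      inv_mul_cancel₀ hs.ne', one_smul]
  rw [e1, norm_smul, norm_inv, Real.norm_of_nonneg hs.le]
  rw [add_sub_cancel_left, norm_smul, he, mul_one, Real.norm_of_nonneg hs.le] at h2
  rw [add_sub_cancel_left]
  calc s⁻¹ * _ ≤ s⁻¹ * (ε * s) := by gcongr
    _ = ε := by field_simp

end ConfLemma

namespace ConfLemma
variable {d : ℕ}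

/-- directional derivative -/
def pd (v : Eu d) (η : Eu d → ℝ) (x : Eu d) : ℝ := fderiv ℝ η x v

/-- Laplacian -/
def lap (η : Eu d → ℝ) (x : Eu d) : ℝ := ∑ j, pd (eb d j) (pd (eb d j) η) x

lemma pd_contDiff {η : Eu d → ℝ} {k : ℕ} (hη : ContDiff ℝ (k + 1 : ℕ) η) (v : Eu d) :
    ContDiff ℝ k (pd v η) := by
  unfold pd
  exact (hη.fderiv_right (m := k) (by norm_cast)).clm_apply contDiff_const

lemma pd_zero {η : Eu d → ℝ} {v x : Eu d} (hx : x ∉ tsupport η) : pd v η x = 0 := by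
  unfold pd
  rw [fderiv_zero_of hx]; rfl

lemma tsupport_pd (η : Eu d → ℝ) (v : Eu d) : tsupport (pd v η) ⊆ tsupport η :=
  closure_minimal (fun _ hx => by_contra fun h => hx (pd_zero h)) (isClosed_tsupport η)

lemma hasCompactSupport_pd {η : Eu d → ℝ} (h : HasCompactSupport η) (v : Eu d) :
    HasCompactSupport (pd v η) := HasCompactSupport.intro h fun _ hx => pd_zero hx

lemma lap_zero {η : Eu d → ℝ} {x : Eu d} (hx : x ∉ tsupport η) : lap η x = 0 :=
  Finset.sum_eq_zero fun _ _ => pd_zero fun h => hx (tsupport_pd _ _ h)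

lemma pd_continuous {η : Eu d → ℝ} (hη : ContDiff ℝ 1 η) (v : Eu d) : Continuous (pd v η) := by
  have := hη.continuous_fderiv one_ne_zero
  unfold pd; fun_prop

lemma lap_continuous {η : Eu d → ℝ} (hη : ContDiff ℝ 2 η) : Continuous (lap η) := by
  unfold lap
  refine continuous_finsetSum _ fun j _ => pd_continuous ?_ _
  exact_mod_cast pd_contDiff (k := 1) (by exact_mod_cast hη) _

lemma ibp_pd {N η : Eu d → ℝ} (hN : ContDiff ℝ 1 N) (hη : ContDiff ℝ 1 η)
    (hc : HasCompactSupport η) (v : Eu d) :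
    ∫ x, η x * pd v N x = - ∫ x, N x * pd v η x := by
  have c1 := pd_continuous hN v
  have c2 := pd_continuous hη v
  have h := integral_mul_fderiv_eq_neg_fderiv_mul_of_integrable (μ := (volume : Measure (Eu d)))
    (f := η) (g := N) (v := v)
    (integrable_of_zero (c2.mul hN.continuous) hc fun x hx => by
      rw [fderiv_zero_of hx]; simp)
    (integrable_of_zero (hη.continuous.mul c1) hc fun x hx => by
      rw [image_eq_zero_of_notMem_tsupport hx, zero_mul])
    (integrable_of_zero (hη.continuous.mul hN.continuous) hc fun x hx => by
      rw [image_eq_zero_of_notMem_tsupport hx, zero_mul])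
    (fun x _ => hη.differentiable one_ne_zero x)
    (fun x _ => hN.differentiable one_ne_zero x)
  simp only [mul_comm (N _)]
  exact h

lemma ibp_lap {N η : Eu d → ℝ} (hN : ContDiff ℝ 1 N) (hη : ContDiff ℝ 2 η)
    (hc : HasCompactSupport η) :
    ∫ x, fderiv ℝ N x (gr (fderiv ℝ η x)) = - ∫ x, N x * lap η x := by
  have hpd : ∀ v, ContDiff ℝ 1 (pd v η) := fun v => by
    exact_mod_cast pd_contDiff (k := 1) (by exact_mod_cast hη) v
  have e1 : ∀ x, fderiv ℝ N x (gr (fderiv ℝ η x)) =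
      ∑ j, pd (eb d j) η x * pd (eb d j) N x := by
    intro x
    simp only [gr, map_sum, map_smul, smul_eq_mul, pd]
  have e2 : ∀ x, N x * lap η x = ∑ j, N x * pd (eb d j) (pd (eb d j) η) x := fun x => by
    rw [lap, Finset.mul_sum]
  simp_rw [e1, e2]
  rw [integral_finsetSum, integral_finsetSum, ← Finset.sum_neg_distrib]
  · exact Finset.sum_congr rfl fun j _ => ibp_pd hN (hpd _) (hasCompactSupport_pd hc _) _
  · intro j _
    exact integrable_of_zero (hN.continuous.mul (pd_continuous (hpd _) _)) hc fun x hx => by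
      rw [pd_zero fun h => hx (tsupport_pd _ _ h), mul_zero]
  · intro j _
    exact integrable_of_zero ((hpd _).continuous.mul (pd_continuous hN _)) hc fun x hx => by
      rw [pd_zero hx, zero_mul]

lemma hasFDerivAt_norm_pow (hd : 2 ≤ d) {U : Eu d → Eu d} {U' : Eu d →L[ℝ] Eu d} {x : Eu d}
    (hU : HasFDerivAt U U' x) :
    HasFDerivAt (fun x => ‖U x‖ ^ d) ((d * ‖U x‖ ^ (d - 2)) • (innerSL ℝ (U x)).comp U') x := by
  have h1 := hasFDerivAt_norm_rpow (U x) (p := (d : ℝ)) (by exact_mod_cast hd)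
  have h2 := h1.comp x hU
  have e1 : ((d:ℝ) - 2) = ((d - 2 : ℕ) : ℝ) := by push_cast [hd]; rfl
  rw [e1, Real.rpow_natCast] at h2
  simp only [Real.rpow_natCast, Function.comp_def] at h2
  exact h2

lemma contDiff_norm_pow (hd : 2 ≤ d) {U : Eu d → Eu d} (hU : ContDiff ℝ 1 U) :
    ContDiff ℝ 1 (fun x => ‖U x‖ ^ d) := by
  rw [contDiff_one_iff_fderiv]
  have h := fun x => hasFDerivAt_norm_pow hd (hU.differentiable one_ne_zero x).hasFDerivAt
  refine ⟨fun x => (h x).differentiableAt, ?_⟩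
  have c := hU.continuous_fderiv one_ne_zero
  have c' := hU.continuous
  rw [show fderiv ℝ (fun x => ‖U x‖ ^ d) = _ from funext fun x => (h x).fderiv]
  fun_prop

lemma norm_slope_le {f : Eu d → Eu d} (hf : Differentiable ℝ f) (h1 : ∀ x, ‖fderiv ℝ f x‖ ≤ 1)
    {s : ℝ} (hs : 0 < s) {e : Eu d} (he : ‖e‖ = 1) (x : Eu d) :
    ‖s⁻¹ • (f (x + s • e) - f x)‖ ≤ 1 := by
  have := lip_of_fderiv hf h1 (x + s • e) x
  rw [add_sub_cancel_left, norm_smul, he, mul_one, one_mul, Real.norm_of_nonneg hs.le] at this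
  rw [norm_smul, norm_inv, Real.norm_of_nonneg hs.le]
  calc s⁻¹ * _ ≤ s⁻¹ * s := by gcongr
    _ = 1 := inv_mul_cancel₀ hs.ne'

lemma tendsto_slope {X : Type*} [NormedAddCommGroup X] [NormedSpace ℝ X] {f : Eu d → X}
    {x e : Eu d} (hf : DifferentiableAt ℝ f x) :
    Tendsto (fun s : ℝ => s⁻¹ • (f (x + s • e) - f x)) (𝓝[>] 0) (𝓝 (fderiv ℝ f x e)) := by
  have h := (hf.hasFDerivAt.hasLineDerivAt e).tendsto_slope_zero
  exact h.mono_left (nhdsWithin_mono _ fun s (hs : 0 < s) => hs.ne')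

lemma limit_one {f : Eu d → Eu d} (hf : Conf f) (h1 : ∀ x, ‖fderiv ℝ f x‖ ≤ 1)
    {e : Eu d} (he : ‖e‖ = 1) {k : Eu d → ℝ} (hk : Continuous k) (hc : HasCompactSupport k) :
    Tendsto (fun s : ℝ => ∫ x, ‖s⁻¹ • (f (x + s • e) - f x)‖ ^ d * k x) (𝓝[>] 0)
      (𝓝 (∫ x, ‖fderiv ℝ f x‖ ^ d * k x)) := by
  have cf := hf.1.continuous
  refine tendsto_integral_filter_of_dominated_convergence (fun x => |k x|) ?_ ?_ ?_ ?_
  · refine Eventually.of_forall fun s => Continuous.aestronglyMeasurable ?_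
    fun_prop
  · filter_upwards [self_mem_nhdsWithin] with s hs
    refine Eventually.of_forall fun x => ?_
    rw [norm_mul, norm_pow, norm_norm, Real.norm_eq_abs]
    have := pow_le_one₀ (n := d) (norm_nonneg _) (norm_slope_le hf.differentiable h1 hs he x)
    exact mul_le_of_le_one_left (abs_nonneg _) this
  · exact (hk.integrable_of_hasCompactSupport hc).abs
  · refine Eventually.of_forall fun x => ?_
    have h := tendsto_slope (e := e) (hf.differentiable x)
    have e2 : ‖fderiv ℝ f x e‖ = ‖fderiv ℝ f x‖ := by rw [(hf.2 x).2, he, mul_one]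
    rw [← e2]
    exact ((h.norm).pow d).mul_const _

lemma limit_two {q : Eu d → ℝ} (hq : Continuous q) (hq1 : ∀ x, |q x| ≤ 1)
    {e : Eu d} (he : ‖e‖ = 1) {k : Eu d → ℝ} (hk : ContDiff ℝ 1 k) (hc : HasCompactSupport k) :
    Tendsto (fun s : ℝ => ∫ x, s⁻¹ * (q (x + s • e) - q x) * k x) (𝓝[>] 0)
      (𝓝 (- ∫ x, q x * pd e k x)) := by
  have ck := hk.continuous
  have e1 : ∀ s : ℝ, ∫ x, s⁻¹ * (q (x + s • e) - q x) * k x =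
      ∫ x, q x * (s⁻¹ • (k (x + s • (-e)) - k x)) := by
    intro s
    have i1 : Integrable fun x => q (x + s • e) * k x :=
      integrable_of_zero (by fun_prop) hc fun x hx => by
        rw [image_eq_zero_of_notMem_tsupport hx, mul_zero]
    have i2 : Integrable fun x => q x * k x :=
      integrable_of_zero (by fun_prop) hc fun x hx => by
        rw [image_eq_zero_of_notMem_tsupport hx, mul_zero]
    have i3 : Integrable fun x => q x * k (x + s • (-e)) := by
      have := i1.comp_add_right (s • (-e))
      simpa using this
    have t : ∫ x, q (x + s • e) * k x = ∫ x, q x * k (x + s • (-e)) := by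
      rw [← integral_add_right_eq_self (fun x => q (x + s • e) * k x) (s • (-e))]
      simp
    have l : (fun x => s⁻¹ * (q (x + s • e) - q x) * k x) =
        fun x => s⁻¹ * (q (x + s • e) * k x - q x * k x) := by ext x; ring
    have r : (fun x => q x * (s⁻¹ • (k (x + s • (-e)) - k x))) =
        fun x => s⁻¹ * (q x * k (x + s • (-e)) - q x * k x) := by
      ext x; rw [smul_eq_mul]; ring
    rw [l, r, integral_const_mul, integral_const_mul, integral_sub i1 i2, integral_sub i3 i2, t]
  simp_rw [e1]
  rw [← integral_neg]
  obtain ⟨B, hB⟩ := (hc.fderiv (𝕜 := ℝ)).exists_bound_of_continuous (hk.continuous_fderiv one_ne_zero)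
  have hL : ∀ x y, ‖k x - k y‖ ≤ B * ‖x - y‖ := fun x y =>
    convex_univ.norm_image_sub_le_of_norm_fderiv_le
      (fun x _ => hk.differentiable one_ne_zero x) (fun x _ => hB x)
      (Set.mem_univ _) (Set.mem_univ _)
  have hB0 : 0 ≤ B := (norm_nonneg _).trans (hB 0)
  set T := cthickening 1 (tsupport k) with hT
  have hTc : IsCompact T := hc.isCompact.cthickening
  refine tendsto_integral_filter_of_dominated_convergence (T.indicator fun _ => B) ?_ ?_ ?_ ?_
  · refine Eventually.of_forall fun s => Continuous.aestronglyMeasurable ?_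
    fun_prop
  · have h01 : Set.Ioo (0:ℝ) 1 ∈ 𝓝[>] (0:ℝ) := Ioo_mem_nhdsGT one_pos
    filter_upwards [h01] with s hs
    refine Eventually.of_forall fun x => ?_
    by_cases hx : x ∈ T
    · rw [Set.indicator_of_mem hx, norm_mul, norm_smul, norm_inv, Real.norm_of_nonneg hs.1.le]
      have h3 := hL (x + s • (-e)) x
      rw [add_sub_cancel_left, norm_smul, norm_neg, he, mul_one, Real.norm_of_nonneg hs.1.le] at h3
      have h4 : s⁻¹ * ‖k (x + s • (-e)) - k x‖ ≤ B := by
        calc s⁻¹ * _ ≤ s⁻¹ * (B * s) := mul_le_mul_of_nonneg_left h3 (inv_nonneg.2 hs.1.le)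
          _ = B := by field_simp [hs.1.ne']
      have h5 := hq1 x
      rw [← Real.norm_eq_abs] at h5
      calc _ ≤ 1 * B := mul_le_mul h5 h4 (by have := hs.1.le; positivity) zero_le_one
        _ = B := one_mul B
    · have g1 : x ∉ tsupport k := fun h => hx (self_subset_cthickening _ h)
      have g2 : x + s • (-e) ∉ tsupport k := fun h => hx (mem_cthickening_of_dist_le x _ _ _ h (by
        rw [dist_self_add_right, norm_smul, norm_neg, he, mul_one, Real.norm_of_nonneg hs.1.le]
        exact hs.2.le))
      rw [Set.indicator_of_notMem hx, image_eq_zero_of_notMem_tsupport g1,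
        image_eq_zero_of_notMem_tsupport g2]
      simp
  · exact (integrable_indicator_iff hTc.measurableSet).2
      (integrableOn_const hTc.measure_lt_top.ne)
  · refine Eventually.of_forall fun x => ?_
    have h := tendsto_slope (e := -e) (hk.differentiable one_ne_zero x)
    rw [map_neg] at h
    have := h.const_mul (q x)
    rw [mul_neg] at this
    exact this

end ConfLemma

namespace ConfLemma
variable {d : ℕ}

lemma exists_low {f : Eu d → Eu d} (hf : Conf f) (R : ℝ) (hR : 0 ≤ R) (p : ℕ) :
    ∃ m > 0, ∀ x ∈ closedBall (0 : Eu d) R, m ≤ ‖fderiv ℝ f x‖ ^ p := by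
  obtain ⟨x, -, hx⟩ := (isCompact_closedBall (0 : Eu d) R).exists_isMinOn
    ⟨0, mem_closedBall_self hR⟩ ((hf.continuous_fderiv.norm.pow p).continuousOn)
  exact ⟨_, pow_pos (hf.2 x).1 p, fun y hy => hx hy⟩

set_option maxHeartbeats 1000000 in
lemma subharm_step {f : Eu d → Eu d} (hf : Conf f) (hd : 2 ≤ d) (h1 : ∀ x, ‖fderiv ℝ f x‖ ≤ 1)
    {η : Eu d → ℝ} (hη : ContDiff ℝ 2 η) (hc : HasCompactSupport η) (hpos : ∀ x, 0 ≤ η x)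
    {e : Eu d} (he : ‖e‖ = 1) :
    ∃ κ : ℝ, 0 ≤ κ ∧ ∀ ε > 0, ∀ᶠ s in 𝓝[>] (0:ℝ),
      (- ∫ x, ‖s⁻¹ • (f (x + s • e) - f x)‖ ^ d * lap η x) +
      (d - 2 : ℕ) * ∫ x, s⁻¹ * (‖fderiv ℝ f (x + s • e)‖ ^ d - ‖fderiv ℝ f x‖ ^ d) * pd e η x
        ≤ κ * ε := by
  have hη1 : ContDiff ℝ 1 η := hη.of_le (by norm_num)
  obtain ⟨R, hR⟩ := hc.isCompact.isBounded.subset_closedBall (0 : Eu d)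
  set R' := max R 0 with hR'
  have hR'0 : 0 ≤ R' := le_max_right _ _
  let χ : ContDiffBump (0 : Eu d) := ⟨R' + 1, R' + 2, by linarith, by linarith⟩
  have hχC : ContDiff ℝ 1 χ := χ.contDiff
  have hχc : HasCompactSupport χ := χ.hasCompactSupport
  have hχ1 : ∀ x ∈ tsupport η, χ x = 1 := fun x hx =>
    χ.one_of_mem_closedBall (closedBall_subset_closedBall (by
      show R ≤ R' + 1
      have := le_max_left R 0; linarith) (hR hx))
  have hχt : tsupport χ = closedBall 0 (R' + 2) := χ.tsupport_eq
  obtain ⟨m, hm, hmle⟩ := exists_low hf (R' + 4) (by linarith) (d - 2)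
  obtain ⟨B, hB⟩ := (hc.fderiv (𝕜 := ℝ)).exists_bound_of_continuous
    (hη.continuous_fderiv two_ne_zero)
  have hB0 : 0 ≤ B := (norm_nonneg _).trans (hB 0)
  set C := 4 * (1 + (d - 2 : ℕ)) ^ 2 / m ^ 2 * ∫ x, ‖fderiv ℝ χ x‖ ^ 2 with hC
  have hC0 : 0 ≤ C := by
    have : 0 ≤ ∫ x, ‖fderiv ℝ χ x‖ ^ 2 := integral_nonneg fun x => by positivity
    positivity
  set V := ∫ x, χ x ^ 2 with hV
  have hV0 : 0 ≤ V := integral_nonneg fun x => by positivity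
  have hcst := cst_nonneg (d - 2)
  refine ⟨d * cst (d - 2) * B * (V + C), by positivity, fun ε hε => ?_⟩
  obtain ⟨δ, hδ, hmod⟩ := unif_mod hf hc.isCompact hε
  have hmem : Set.Ioo (0:ℝ) (min δ 1) ∈ 𝓝[>] (0:ℝ) := Ioo_mem_nhdsGT (lt_min hδ one_pos)
  filter_upwards [hmem] with s hs
  have hs0 : 0 < s := hs.1
  have hsδ : s < δ := hs.2.trans_le (min_le_left _ _)
  have hs1 : s < 1 := hs.2.trans_le (min_le_right _ _)
  set g : Eu d → Eu d := fun x => f (x + s • e) with hg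
  have hgC : Conf g := conf_shift hf _
  have hgD : ∀ x, fderiv ℝ g x = fderiv ℝ f (x + s • e) := fun x => fderiv_comp_add_right _
  have hse : ‖s • e‖ = s := by rw [norm_smul, he, mul_one, Real.norm_of_nonneg hs0.le]
  -- Caccioppoli
  have hcac := caccioppoli hf hgC hd h1 (fun x => by rw [hgD]; exact h1 _) hχC hχc hm
    (fun x hx => hmle x (by
      rw [hχt] at hx; exact closedBall_subset_closedBall (by linarith) hx))
    (fun x hx => by
      rw [hgD]
      refine hmle _ ?_
      rw [hχt, mem_closedBall_zero_iff] at hx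
      rw [mem_closedBall_zero_iff]
      have := norm_add_le x (s • e)
      linarith)
    (s := s) (fun x => by
      have := lip_of_fderiv hf.differentiable h1 (x + s • e) x
      rwa [add_sub_cancel_left, hse, one_mul] at this)
  rw [← hC] at hcac
  -- the weak inequality
  have hid := diff_identity hf hgC hd hη1 hc
  have hQ : 0 ≤ ∫ x, η x * frob (cof g x - cof f x) (fderiv ℝ g x - fderiv ℝ f x) := by
    refine integral_nonneg fun x => mul_nonneg (hpos x) ?_
    have := Q_lower (hf.2 x) (hgC.2 x) (d - 2) le_rfl (by positivity) (by positivity)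
    rw [zero_mul] at this
    exact this
  set U : Eu d → Eu d := fun x => s⁻¹ • (f (x + s • e) - f x) with hU
  have hUC : ContDiff ℝ 1 U := (hgC.1.sub hf.1).const_smul s⁻¹
  have hUD : ∀ x, HasFDerivAt U (s⁻¹ • (fderiv ℝ g x - fderiv ℝ f x)) x := fun x =>
    ((hgC.differentiable x).hasFDerivAt.sub (hf.differentiable x).hasFDerivAt).const_smul s⁻¹
  have hU1 : ∀ x, ‖U x‖ ≤ 1 := norm_slope_le hf.differentiable h1 hs0 he
  set N : Eu d → ℝ := fun x => ‖U x‖ ^ d with hN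
  have hNC : ContDiff ℝ 1 N := contDiff_norm_pow hd hUC
  have hND : ∀ x v, fderiv ℝ N x v =
      d * (‖U x‖ ^ (d - 2) * (s⁻¹ * inner ℝ ((fderiv ℝ g x - fderiv ℝ f x) v) (U x))) := by
    intro x v
    rw [(hasFDerivAt_norm_pow hd (hUD x)).fderiv]
    simp only [smul_apply, ContinuousLinearMap.comp_apply, innerSL_apply_apply, smul_eq_mul,
      inner_smul_right]
    rw [real_inner_comm]
    ring
  have c1 := hf.continuous_cof
  have c1' := hgC.continuous_cof
  have cf := hf.1.continuous
  have cF := hf.continuous_fderiv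
  have cG := hgC.continuous_fderiv
  have cη := hη1.continuous_fderiv one_ne_zero
  have cw := continuous_gr cη
  have cU := hUC.continuous
  have cN := hNC.continuous_fderiv one_ne_zero
  have cpd := pd_continuous hη1 e
  set I : Eu d → ℝ := fun x => s⁻¹ * inner ℝ ((cof g x - cof f x) (gr (fderiv ℝ η x))) (U x) with hI
  have iI : Integrable I := integrable_of_zero (by fun_prop) hc fun x hx => by
    simp only [hI]; rw [fderiv_zero_of hx, gr_zero, map_zero, inner_zero_left, mul_zero]
  have hI0 : ∫ x, I x ≤ 0 := by
    have e1 : ∀ x, I x = (s⁻¹) ^ 2 *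
        inner ℝ ((cof g x - cof f x) (gr (fderiv ℝ η x))) (g x - f x) := by
      intro x
      simp only [hI, hU, hg, inner_smul_right]
      ring
    simp_rw [e1]
    rw [integral_const_mul]
    refine mul_nonpos_of_nonneg_of_nonpos (by positivity) ?_
    linarith
  set T1 : Eu d → ℝ := fun x => fderiv ℝ N x (gr (fderiv ℝ η x)) with hT1
  set T2 : Eu d → ℝ := fun x =>
    s⁻¹ * (‖fderiv ℝ f (x + s • e)‖ ^ d - ‖fderiv ℝ f x‖ ^ d) * pd e η x with hT2
  set T3 : Eu d → ℝ := fun x => χ x ^ 2 * ‖fderiv ℝ g x - fderiv ℝ f x‖ ^ 2 with hT3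
  have cχ := hχC.continuous
  have iT1 : Integrable T1 := integrable_of_zero (by fun_prop) hc fun x hx => by
    simp only [hT1]; rw [fderiv_zero_of hx, gr_zero, map_zero]
  have iT2 : Integrable T2 := integrable_of_zero (by fun_prop) hc fun x hx => by
    simp only [hT2]; rw [pd_zero hx, mul_zero]
  have iT3 : Integrable T3 := integrable_of_zero (by fun_prop) hχc fun x hx => by
    simp only [hT3]; rw [image_eq_zero_of_notMem_tsupport hx]; norm_num
  have iV : Integrable fun x => χ x ^ 2 := integrable_of_zero (by fun_prop) hχc fun x hx => by
    rw [image_eq_zero_of_notMem_tsupport hx]; norm_num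
  have hpt : ∀ x, T1 x + (d - 2 : ℕ) * T2 x ≤ d * I x +
      (d * cst (d - 2) * ε * B) * (χ x ^ 2 + (s⁻¹) ^ 2 * T3 x) := by
    intro x
    by_cases hx : x ∈ tsupport η
    swap
    · have : T1 x = 0 ∧ T2 x = 0 ∧ I x = 0 := by
        simp only [hT1, hT2, hI]
        rw [fderiv_zero_of hx, gr_zero, map_zero, map_zero, inner_zero_left, pd_zero hx]
        simp
      rw [this.1, this.2.1, this.2.2]
      have : 0 ≤ T3 x := by positivity
      have : 0 ≤ (d * cst (d - 2) * ε * B) * (χ x ^ 2 + (s⁻¹) ^ 2 * T3 x) := by positivity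
      linarith
    · obtain ⟨m1, m2⟩ := hmod s hs0 hsδ e he x hx
      rw [← hgD x] at m1
      have hp := pointwise_est (hf.2 x) (d - 2) (h1 x) (G := fderiv ℝ g x)
        (by rw [hgD]; exact h1 _) (w := gr (fderiv ℝ η x)) he (hU1 x) m2 m1
      have hdd : d - 2 + 2 = d := by omega
      have hdd' : ((d - 2 : ℕ) : ℝ) + 2 = d := by exact_mod_cast hdd
      rw [hdd, hdd', real_inner_comm (gr (fderiv ℝ η x)) e, inner_gr] at hp
      have hd0 : (0:ℝ) < d := by exact_mod_cast (by omega : 0 < d)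
      have hlow := (abs_le.1 hp).1
      set K := ‖fderiv ℝ g x - fderiv ℝ f x‖ with hK
      have hwB : ‖gr (fderiv ℝ η x)‖ ≤ B := (norm_gr_le _).trans (hB x)
      have e1 : T1 x = d * s⁻¹ * (‖U x‖ ^ (d - 2) *
          inner ℝ ((fderiv ℝ g x - fderiv ℝ f x) (gr (fderiv ℝ η x))) (U x)) := by
        simp only [hT1, hND]; ring
      have e2 : (d - 2 : ℕ) * T2 x = d * s⁻¹ * (((d - 2 : ℕ) : ℝ) / d *
          (‖fderiv ℝ g x‖ ^ d - ‖fderiv ℝ f x‖ ^ d) * fderiv ℝ η x e) := by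
        simp only [hT2, hgD, pd]; field_simp
      have e3 : d * I x = d * s⁻¹ *
          inner ℝ ((cof g x - cof f x) (gr (fderiv ℝ η x))) (U x) := by
        simp only [hI]; ring
      have e4 : d * s⁻¹ * (cst (d - 2) * (ε * K * ‖gr (fderiv ℝ η x)‖)) ≤
          (d * cst (d - 2) * ε * B) * (χ x ^ 2 + (s⁻¹) ^ 2 * T3 x) := by
        have g1 : s⁻¹ * K ≤ 1 + (s⁻¹ * K) ^ 2 := by nlinarith [sq_nonneg (s⁻¹ * K - 1)]
        have g2 : χ x ^ 2 + (s⁻¹) ^ 2 * T3 x = 1 + (s⁻¹ * K) ^ 2 := by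
          simp only [hT3, hχ1 x hx]; ring
        rw [g2]
        calc _ = (d * cst (d - 2) * ε * ‖gr (fderiv ℝ η x)‖) * (s⁻¹ * K) := by ring
          _ ≤ _ := by gcongr
      have hlow' := mul_le_mul_of_nonneg_left hlow (by positivity : 0 ≤ d * s⁻¹)
      rw [e1, e2, e3]
      have e5 : inner ℝ ((cof g x - cof f x) (gr (fderiv ℝ η x))) (U x) = inner ℝ ((‖fderiv ℝ g x‖ ^ (d - 2) • fderiv ℝ g x - ‖fderiv ℝ f x‖ ^ (d - 2) • fderiv ℝ f x) (gr (fderiv ℝ η x))) (U x) := rfl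
      rw [e5]
      linarith [hlow', e4]
  have i4 : Integrable fun x => χ x ^ 2 + (s⁻¹) ^ 2 * T3 x := iV.add (iT3.const_mul _)
  have hIntg := integral_mono (iT1.add (iT2.const_mul _))
    ((iI.const_mul d).add (i4.const_mul _)) hpt
  simp only [Pi.add_apply] at hIntg
  rw [integral_add iT1 (iT2.const_mul _), integral_const_mul,
    integral_add (iI.const_mul d) (i4.const_mul _),
    integral_const_mul (d : ℝ) I, integral_const_mul (d * cst (d - 2) * ε * B)
      (fun x => χ x ^ 2 + (s⁻¹) ^ 2 * T3 x)] at hIntg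
  rw [integral_add iV (iT3.const_mul _), integral_const_mul ((s⁻¹) ^ 2) T3, ibp_lap hNC hη hc, ← hV] at hIntg
  have hI3 : (s⁻¹) ^ 2 * ∫ x, T3 x ≤ C := by
    calc (s⁻¹) ^ 2 * ∫ x, T3 x ≤ (s⁻¹) ^ 2 * (C * s ^ 2) := by gcongr
      _ = C := by field_simp
  have hdI : d * ∫ x, I x ≤ 0 := mul_nonpos_of_nonneg_of_nonpos (Nat.cast_nonneg d) hI0
  have hfin : d * cst (d - 2) * ε * B * (V + (s⁻¹) ^ 2 * ∫ x, T3 x) ≤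
      d * cst (d - 2) * ε * B * (V + C) := by gcongr
  refine hIntg.trans ?_
  calc _ ≤ d * cst (d - 2) * ε * B * (V + C) := by linarith
    _ = _ := by ring

lemma subharm_dir {f : Eu d → Eu d} (hf : Conf f) (hd : 2 ≤ d) (h1 : ∀ x, ‖fderiv ℝ f x‖ ≤ 1)
    {η : Eu d → ℝ} (hη : ContDiff ℝ 2 η) (hc : HasCompactSupport η) (hpos : ∀ x, 0 ≤ η x)
    {e : Eu d} (he : ‖e‖ = 1) :
    0 ≤ (∫ x, ‖fderiv ℝ f x‖ ^ d * lap η x) +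
      (d - 2 : ℕ) * ∫ x, ‖fderiv ℝ f x‖ ^ d * pd e (pd e η) x := by
  obtain ⟨κ, hκ, h⟩ := subharm_step hf hd h1 hη hc hpos he
  have hk : ContDiff ℝ 1 (pd e η) := by
    exact_mod_cast pd_contDiff (k := 1) (by exact_mod_cast hη) e
  have l1 := limit_one hf h1 he (lap_continuous hη)
    (HasCompactSupport.intro hc fun x hx => lap_zero hx)
  have l2 := limit_two (q := fun x => ‖fderiv ℝ f x‖ ^ d) (hf.continuous_fderiv.norm.pow d)
    (fun x => by
      rw [abs_of_nonneg (by positivity)]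
      exact pow_le_one₀ (norm_nonneg _) (h1 x)) he hk (hasCompactSupport_pd hc e)
  have l3 := l1.neg.add (l2.const_mul ((d - 2 : ℕ) : ℝ))
  have key : ∀ ε > 0, (- ∫ x, ‖fderiv ℝ f x‖ ^ d * lap η x) +
      (d - 2 : ℕ) * (- ∫ x, ‖fderiv ℝ f x‖ ^ d * pd e (pd e η) x) ≤ κ * ε :=
    fun ε hε => le_of_tendsto l3 (h ε hε)
  have key2 : (- ∫ x, ‖fderiv ℝ f x‖ ^ d * lap η x) +
      (d - 2 : ℕ) * (- ∫ x, ‖fderiv ℝ f x‖ ^ d * pd e (pd e η) x) ≤ 0 := by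
    refine le_of_forall_pos_le_add fun ε hε => ?_
    have := key (ε / (κ + 1)) (by positivity)
    have h2 : κ * (ε / (κ + 1)) ≤ ε := by
      rw [← mul_div_assoc, div_le_iff₀ (by positivity)]
      nlinarith
    linarith
  linarith

/-- `‖Df‖^d` is weakly subharmonic. -/
lemma subharm {f : Eu d → Eu d} (hf : Conf f) (hd : 2 ≤ d) (h1 : ∀ x, ‖fderiv ℝ f x‖ ≤ 1)
    {η : Eu d → ℝ} (hη : ContDiff ℝ 2 η) (hc : HasCompactSupport η) (hpos : ∀ x, 0 ≤ η x) :
    0 ≤ ∫ x, ‖fderiv ℝ f x‖ ^ d * lap η x := by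
  have h := Finset.sum_nonneg fun (j : Fin d) (_ : j ∈ Finset.univ) =>
    subharm_dir hf hd h1 hη hc hpos ((eb d).norm_eq_one j)
  have hk : ∀ v, ContDiff ℝ 1 (pd v η) := fun v => by
    exact_mod_cast pd_contDiff (k := 1) (by exact_mod_cast hη) v
  have e2 : ∫ x, ‖fderiv ℝ f x‖ ^ d * lap η x =
      ∑ j, ∫ x, ‖fderiv ℝ f x‖ ^ d * pd (eb d j) (pd (eb d j) η) x := by
    rw [← integral_finsetSum]
    · simp only [lap, Finset.mul_sum]
    · intro j _
      exact integrable_of_zero ((hf.continuous_fderiv.norm.pow d).mul (pd_continuous (hk _) _)) hc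
        fun x hx => by rw [pd_zero fun h => hx (tsupport_pd _ _ h), mul_zero]
  rw [Finset.sum_add_distrib, ← Finset.mul_sum, ← e2, Finset.sum_const, Finset.card_univ,
    Fintype.card_fin, nsmul_eq_mul] at h
  have hd0 : (0:ℝ) < d := by exact_mod_cast (by omega : 0 < d)
  have h3 : 0 ≤ (d + (d - 2 : ℕ) : ℝ) * ∫ x, ‖fderiv ℝ f x‖ ^ d * lap η x := by linarith
  exact nonneg_of_mul_nonneg_right h3 (by positivity)

end ConfLemma

namespace ConfLemma
variable {d : ℕ}

/-- first derivative of the smooth glue function -/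
def g1 (t : ℝ) : ℝ := t⁻¹ ^ 2 * expNegInvGlue t
/-- second derivative of the smooth glue function -/
def g2 (t : ℝ) : ℝ := (t⁻¹ ^ 2 * (t⁻¹ ^ 2 - 2 * t⁻¹)) * expNegInvGlue t

lemma hasDerivAt_g (t : ℝ) : HasDerivAt expNegInvGlue (g1 t) t := by
  have := expNegInvGlue.hasDerivAt_polynomial_eval_inv_mul 1 t
  simpa [g1] using this

lemma hasDerivAt_g1 (t : ℝ) : HasDerivAt g1 (g2 t) t := by
  have := expNegInvGlue.hasDerivAt_polynomial_eval_inv_mul (Polynomial.X ^ 2) t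
  simp only [Polynomial.eval_pow, Polynomial.eval_X, Polynomial.eval_mul, Polynomial.eval_sub,
    Polynomial.derivative_X_pow, Polynomial.eval_natCast, Polynomial.eval_C] at this
  have e : g1 = fun t => t⁻¹ ^ 2 * expNegInvGlue t := rfl
  rw [e]; simpa [g2] using this

lemma continuous_g1 : Continuous g1 :=
  continuous_iff_continuousAt.2 fun t => (hasDerivAt_g1 t).continuousAt

lemma continuous_g2 : Continuous g2 := by
  have := expNegInvGlue.continuous_polynomial_eval_inv_mul
    (Polynomial.X ^ 2 * (Polynomial.X ^ 2 - Polynomial.C 2 * Polynomial.X))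
  have e : g2 = fun t => (t⁻¹ ^ 2 * (t⁻¹ ^ 2 - 2 * t⁻¹)) * expNegInvGlue t := rfl
  rw [e]; simpa using this

lemma g1_zero {t : ℝ} (ht : t ≤ 0) : g1 t = 0 := by
  simp [g1, expNegInvGlue.zero_of_nonpos ht]

lemma g2_zero {t : ℝ} (ht : t ≤ 0) : g2 t = 0 := by
  simp [g2, expNegInvGlue.zero_of_nonpos ht]

lemma g1_nonneg (t : ℝ) : 0 ≤ g1 t := mul_nonneg (by positivity) (expNegInvGlue.nonneg t)

lemma g_le_g1 {t : ℝ} (ht : t ≤ 1) : expNegInvGlue t ≤ g1 t := by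
  rcases le_or_gt t 0 with h | h
  · rw [g1_zero h, expNegInvGlue.zero_of_nonpos h]
  · have : 1 ≤ t⁻¹ := (one_le_inv₀ h).2 ht
    have h2 : 1 ≤ t⁻¹ ^ 2 := one_le_pow₀ this
    unfold g1
    nlinarith [expNegInvGlue.nonneg t]

/-- radial bump -/
def bmp (d : ℕ) (k : ℝ) (x : Eu d) : ℝ := expNegInvGlue (1 - k * ‖x‖ ^ 2)

lemma hasFDerivAt_inner (k : ℝ) (x : Eu d) : HasFDerivAt (fun x : Eu d => 1 - k * ‖x‖ ^ 2)
    ((-(2 * k)) • innerSL ℝ x) x := by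
  have h := ((hasStrictFDerivAt_norm_sq x).hasFDerivAt.const_mul k).const_sub 1
  have e : ((-(2 * k)) • innerSL ℝ x : Eu d →L[ℝ] ℝ) = -(k • 2 • (innerSL ℝ) x) := by
    ext v; simp; ring
  rw [e]; exact h

lemma bmp_contDiff (k : ℝ) {n : ℕ} : ContDiff ℝ n (bmp d k) := by
  unfold bmp
  have h1 : ContDiff ℝ n expNegInvGlue := by exact_mod_cast expNegInvGlue.contDiff (n := n)
  exact h1.comp (contDiff_const.sub (contDiff_const.mul (contDiff_norm_sq ℝ)))

lemma bmp_arg {k : ℝ} {x : Eu d} {R : ℝ} (hR : 0 ≤ R) (hk : 1 ≤ k * R ^ 2) (hx : R ≤ ‖x‖) :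
    1 - k * ‖x‖ ^ 2 ≤ 0 := by
  have hk0 : 0 ≤ k := by
    by_contra h
    nlinarith [sq_nonneg R]
  have : R ^ 2 ≤ ‖x‖ ^ 2 := by gcongr
  nlinarith

lemma bmp_compact {k : ℝ} (hk : 0 < k) : HasCompactSupport (bmp d k) := by
  have hs := Real.sqrt_pos.2 hk
  refine HasCompactSupport.intro (isCompact_closedBall (0 : Eu d) (√k)⁻¹) fun x hx => ?_
  rw [mem_closedBall_zero_iff, not_le] at hx
  refine expNegInvGlue.zero_of_nonpos (bmp_arg (inv_nonneg.2 hs.le) ?_ hx.le)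
  rw [inv_pow, Real.sq_sqrt hk.le, mul_inv_cancel₀ hk.ne']

lemma fderiv_bmp (k : ℝ) (x : Eu d) :
    fderiv ℝ (bmp d k) x = (g1 (1 - k * ‖x‖ ^ 2) * (-(2 * k))) • innerSL ℝ x := by
  have h := ((hasDerivAt_g (1 - k * ‖x‖ ^ 2)).comp_hasFDerivAt x (hasFDerivAt_inner k x)).fderiv
  unfold bmp
  simp only [Function.comp_def] at h
  rw [h, smul_smul]

lemma pd_bmp (k : ℝ) (v : Eu d) : pd v (bmp d k) =
    fun x => (g1 (1 - k * ‖x‖ ^ 2) * (-(2 * k))) * inner ℝ x v := by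
  ext x
  rw [pd, fderiv_bmp]; simp

lemma pd_pd_bmp (k : ℝ) (v x : Eu d) : pd v (pd v (bmp d k)) x =
    -(2 * k) * (g1 (1 - k * ‖x‖ ^ 2) * ‖v‖ ^ 2 - 2 * k * g2 (1 - k * ‖x‖ ^ 2) * inner ℝ x v ^ 2) := by
  rw [pd_bmp]
  have h1 := ((hasDerivAt_g1 (1 - k * ‖x‖ ^ 2)).comp_hasFDerivAt x (hasFDerivAt_inner k x)).mul_const
    (-(2 * k))
  have h2 : HasFDerivAt (fun y : Eu d => inner ℝ y v) (innerSL ℝ v) x := by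
    have := (innerSL ℝ v).hasFDerivAt (x := x)
    convert this using 1
    ext y; simp [real_inner_comm]
  have h := (h1.mul h2).fderiv
  unfold pd
  simp only [Function.comp_def] at h
  have h' := congrArg (fun T : Eu d →L[ℝ] ℝ => T v) h
  refine Eq.trans h' ?_
  simp
  ring

lemma lap_bmp (k : ℝ) (x : Eu d) : lap (bmp d k) x =
    -(2 * k) * (d * g1 (1 - k * ‖x‖ ^ 2) - 2 * k * ‖x‖ ^ 2 * g2 (1 - k * ‖x‖ ^ 2)) := by
  unfold lap
  simp only [pd_pd_bmp, ← Finset.mul_sum, Finset.sum_sub_distrib]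
  rw [(eb d).sum_sq_inner_left x]
  simp
  left; ring

/-- the kernel -/
def ker (d : ℕ) (s : ℝ) (x : Eu d) : ℝ := s ^ d * g1 (1 - s ^ 2 * ‖x‖ ^ 2)
/-- derivative of the kernel -/
def ker' (d : ℕ) (s : ℝ) (x : Eu d) : ℝ := -(s ^ d / (2 * s ^ 3)) * lap (bmp d (s ^ 2)) x

lemma ker'_eq {s : ℝ} (hs : 0 < s) (x : Eu d) : ker' d s x = s ^ d * s⁻¹ *
    (d * g1 (1 - s ^ 2 * ‖x‖ ^ 2) - 2 * s ^ 2 * ‖x‖ ^ 2 * g2 (1 - s ^ 2 * ‖x‖ ^ 2)) := by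
  rw [ker', lap_bmp]
  field_simp

lemma hasDerivAt_ker {s : ℝ} (hs : 0 < s) (x : Eu d) :
    HasDerivAt (fun s => ker d s x) (ker' d s x) s := by
  have h1 : HasDerivAt (fun s : ℝ => 1 - s ^ 2 * ‖x‖ ^ 2) (-(2 * s * ‖x‖ ^ 2)) s := by
    have := ((hasDerivAt_pow 2 s).mul_const (‖x‖ ^ 2)).const_sub 1
    simpa using this
  have h2 := (hasDerivAt_pow d s).mul ((hasDerivAt_g1 (1 - s ^ 2 * ‖x‖ ^ 2)).comp s h1)
  unfold ker
  refine h2.congr_deriv ?_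
  rw [ker'_eq hs]
  have : (d : ℝ) * s ^ (d - 1) = d * (s ^ d * s⁻¹) := by
    rcases Nat.eq_zero_or_pos d with h | h
    · simp [h]
    · obtain ⟨e, rfl⟩ := Nat.exists_eq_succ_of_ne_zero h.ne'
      simp [pow_succ]; left; field_simp
  rw [this]
  simp only [Function.comp]
  field_simp
  ring

lemma ker'_bound {s0 : ℝ} (hs0 : 0 < s0) : ∃ C : ℝ, ∀ s ∈ Set.Icc (s0 / 2) (2 * s0), ∀ x : Eu d,
    ‖ker' d s x‖ ≤ (closedBall (0 : Eu d) (2 / s0)).indicator (fun _ => C) x := by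
  have hK : IsCompact (Set.Icc (s0 / 2) (2 * s0) ×ˢ closedBall (0 : Eu d) (2 / s0)) :=
    isCompact_Icc.prod (isCompact_closedBall _ _)
  have hc : ContinuousOn (fun p : ℝ × Eu d => p.1 ^ d * p.1⁻¹ *
    (d * g1 (1 - p.1 ^ 2 * ‖p.2‖ ^ 2) - 2 * p.1 ^ 2 * ‖p.2‖ ^ 2 * g2 (1 - p.1 ^ 2 * ‖p.2‖ ^ 2)))
      (Set.Icc (s0 / 2) (2 * s0) ×ˢ closedBall (0 : Eu d) (2 / s0)) := by
    have i1 : ContinuousOn (fun p : ℝ × Eu d => p.1⁻¹)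
      (Set.Icc (s0 / 2) (2 * s0) ×ˢ closedBall (0 : Eu d) (2 / s0)) := by
      refine continuousOn_fst.inv₀ fun p hp => ?_
      have := hp.1.1
      linarith
    have := continuous_g1
    have := continuous_g2
    fun_prop
  obtain ⟨C, hC⟩ := hK.exists_bound_of_continuousOn hc
  refine ⟨C, fun s hs x => ?_⟩
  have hs' : 0 < s := by linarith [hs.1]
  by_cases hx : x ∈ closedBall (0 : Eu d) (2 / s0)
  · rw [Set.indicator_of_mem hx, ker'_eq hs']
    exact hC (s, x) ⟨hs, hx⟩
  · rw [Set.indicator_of_notMem hx, ker'_eq hs']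
    rw [mem_closedBall_zero_iff, not_le] at hx
    have : 1 - s ^ 2 * ‖x‖ ^ 2 ≤ 0 := by
      refine bmp_arg (R := 2 / s0) (by positivity) ?_ hx.le
      have h3 : 1 ≤ s * (2 / s0) := by
        rw [mul_div_assoc', le_div_iff₀ hs0]; linarith [hs.1]
      nlinarith
    rw [g1_zero this, g2_zero this]; simp

lemma continuous_ker (s : ℝ) : Continuous (ker d s) := by
  have := continuous_g1
  unfold ker; fun_prop

lemma ker_zero {s : ℝ} (hs : 0 < s) {x : Eu d} (hx : x ∉ tsupport (bmp d (s ^ 2))) :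
    ker d s x = 0 := by
  have h := image_eq_zero_of_notMem_tsupport hx
  rw [bmp, expNegInvGlue.zero_iff_nonpos] at h
  rw [ker, g1_zero h, mul_zero]

lemma lamd_cont {f : Eu d → Eu d} (hf : Conf f) : Continuous fun x => ‖fderiv ℝ f x‖ ^ d :=
  hf.continuous_fderiv.norm.pow d

lemma integrable_ker {f : Eu d → Eu d} (hf : Conf f) {s : ℝ} (hs : 0 < s) :
    Integrable fun x => ‖fderiv ℝ f x‖ ^ d * ker d s x :=
  integrable_of_zero ((lamd_cont hf).mul (continuous_ker s)) (bmp_compact (k := s ^ 2) (by positivity))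
    fun x hx => by rw [ker_zero hs hx, mul_zero]

lemma antitone_ker {f : Eu d → Eu d} (hf : Conf f) (hd : 2 ≤ d) (h1 : ∀ x, ‖fderiv ℝ f x‖ ≤ 1) :
    AntitoneOn (fun s => ∫ x, ‖fderiv ℝ f x‖ ^ d * ker d s x) (Set.Ioi 0) := by
  have key : ∀ s0 : ℝ, 0 < s0 → HasDerivAt (fun s => ∫ x, ‖fderiv ℝ f x‖ ^ d * ker d s x)
      (∫ x, ‖fderiv ℝ f x‖ ^ d * ker' d s0 x) s0 := by
    intro s0 hs0
    obtain ⟨C, hC⟩ := ker'_bound (d := d) hs0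
    have hmem : Set.Icc (s0 / 2) (2 * s0) ∈ 𝓝 s0 := Icc_mem_nhds (by linarith) (by linarith)
    have hk'c : Continuous (ker' d s0) := by
      unfold ker'
      exact continuous_const.mul (lap_continuous (bmp_contDiff (n := 2) _))
    refine (hasDerivAt_integral_of_dominated_loc_of_deriv_le (F' := fun s x => ‖fderiv ℝ f x‖ ^ d * ker' d s x)
      (bound := (closedBall (0 : Eu d) (2 / s0)).indicator (fun _ => C)) hmem ?_
      (integrable_ker hf hs0) ?_ ?_ ?_ ?_).2
    · exact Eventually.of_forall fun s => ((lamd_cont hf).mul (continuous_ker s)).aestronglyMeasurable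
    · exact ((lamd_cont hf).mul hk'c).aestronglyMeasurable
    · refine Eventually.of_forall fun x s hs => ?_
      have := hC s hs x
      rw [norm_mul]
      have h2 : ‖‖fderiv ℝ f x‖ ^ d‖ ≤ 1 := by
        rw [norm_pow, norm_norm]; exact pow_le_one₀ (norm_nonneg _) (h1 x)
      calc _ ≤ 1 * ‖ker' d s x‖ := by gcongr
        _ ≤ _ := by rw [one_mul]; exact this
    · exact (integrableOn_const (measure_closedBall_lt_top.ne)).integrable_indicator measurableSet_closedBall
    · refine Eventually.of_forall fun x s hs => ?_
      have hs' : 0 < s := by linarith [hs.1]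
      exact (hasDerivAt_ker hs' x).const_mul _
  refine antitoneOn_of_deriv_nonpos (convex_Ioi 0) (fun s hs => (key s hs).continuousAt.continuousWithinAt)
    (fun s hs => ?_) fun s hs => ?_
  · rw [interior_Ioi] at hs
    exact (key s hs).differentiableAt.differentiableWithinAt
  · rw [interior_Ioi] at hs
    have hs : 0 < s := hs
    rw [(key s hs).deriv]
    have h := subharm hf hd h1 (bmp_contDiff (d := d) (s ^ 2) (n := 2)) (bmp_compact (by positivity))
      (fun x => expNegInvGlue.nonneg _)
    have e : ∀ x, ‖fderiv ℝ f x‖ ^ d * ker' d s x =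
      -(s ^ d / (2 * s ^ 3)) * (‖fderiv ℝ f x‖ ^ d * lap (bmp d (s ^ 2)) x) := fun x => by
      unfold ker'; ring
    simp_rw [e]
    rw [integral_const_mul]
    have : 0 ≤ s ^ d / (2 * s ^ 3) := by positivity
    nlinarith

lemma ker_scale {f : Eu d → Eu d} {s : ℝ} (hs : 0 < s) :
    ∫ x, ‖fderiv ℝ f x‖ ^ d * ker d s x = ∫ z, ‖fderiv ℝ f (s⁻¹ • z)‖ ^ d * ker d 1 z := by
  have h := Measure.integral_comp_smul (volume : Measure (Eu d))
    (fun z => ‖fderiv ℝ f (s⁻¹ • z)‖ ^ d * ker d 1 z) s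
  have hsd : (0 : ℝ) < s ^ d := by positivity
  rw [finrank_euclideanSpace_fin, abs_of_pos (inv_pos.2 hsd), smul_eq_mul] at h
  have e : ∀ x : Eu d, ‖fderiv ℝ f x‖ ^ d * ker d s x =
    s ^ d * (‖fderiv ℝ f (s⁻¹ • (s • x))‖ ^ d * ker d 1 (s • x)) := by
    intro x
    rw [inv_smul_smul₀ hs.ne', ker, ker, norm_smul, Real.norm_of_nonneg hs.le]
    simp [mul_pow]; ring
  simp_rw [e]
  rw [integral_const_mul, h]
  field_simp

lemma submean {f : Eu d → Eu d} (hf : Conf f) (hd : 2 ≤ d) (h1 : ∀ x, ‖fderiv ℝ f x‖ ≤ 1) :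
    ‖fderiv ℝ f 0‖ ^ d * ∫ x, ker d 1 x ≤ ∫ x, ‖fderiv ℝ f x‖ ^ d * ker d 1 x := by
  have hIntg : Integrable (ker d 1) :=
    integrable_of_zero (continuous_ker 1) (bmp_compact (k := (1:ℝ) ^ 2) (by positivity))
      fun x hx => ker_zero one_pos hx
  have hlim : Tendsto (fun n : ℕ => ∫ x, ‖fderiv ℝ f x‖ ^ d * ker d ((n : ℝ) + 1) x) atTop
      (𝓝 (∫ x, ‖fderiv ℝ f 0‖ ^ d * ker d 1 x)) := by
    have e : ∀ n : ℕ, ∫ x, ‖fderiv ℝ f x‖ ^ d * ker d ((n : ℝ) + 1) x =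
      ∫ z, ‖fderiv ℝ f (((n : ℝ) + 1)⁻¹ • z)‖ ^ d * ker d 1 z := fun n => ker_scale (by positivity)
    simp_rw [e]
    refine tendsto_integral_of_dominated_convergence (fun x => ‖ker d 1 x‖) (fun n => ?_) hIntg.norm
      (fun n => Eventually.of_forall fun x => ?_) (Eventually.of_forall fun x => ?_)
    · exact (((lamd_cont hf).comp (continuous_const_smul _)).mul (continuous_ker 1)).aestronglyMeasurable
    · rw [norm_mul]
      have h2 : ‖‖fderiv ℝ f (((n : ℝ) + 1)⁻¹ • x)‖ ^ d‖ ≤ 1 := by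
        rw [norm_pow, norm_norm]; exact pow_le_one₀ (norm_nonneg _) (h1 _)
      exact mul_le_of_le_one_left (norm_nonneg _) h2
    · refine Tendsto.mul_const _ ?_
      have t0 : Tendsto (fun n : ℕ => ((n : ℝ) + 1)⁻¹ • x) atTop (𝓝 0) := by
        have := (tendsto_one_div_add_atTop_nhds_zero_nat (𝕜 := ℝ)).smul_const x
        simpa using this
      exact ((lamd_cont hf).tendsto 0).comp t0
  rw [integral_const_mul] at hlim
  refine le_of_tendsto hlim (Eventually.of_forall fun n => ?_)
  exact antitone_ker hf hd h1 (Set.mem_Ioi.2 one_pos) (Set.mem_Ioi.2 (by positivity)) (by simp)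

end ConfLemma

namespace ConfLemma
variable {d : ℕ}

lemma gr_bmp (x : Eu d) : gr (fderiv ℝ (bmp d 1) x) = (-2 * ker d 1 x) • x := by
  refine ext_inner_right ℝ fun v => ?_
  rw [inner_gr, fderiv_bmp, ker]
  simp [inner_smul_left]; left; ring

lemma energy {f : Eu d → Eu d} (hf : Conf f) (hd : 2 ≤ d) :
    d * ∫ x, bmp d 1 x * ‖fderiv ℝ f x‖ ^ d =
      2 * ∫ x, ker d 1 x * (‖fderiv ℝ f x‖ ^ (d - 2) * inner ℝ (fderiv ℝ f x x) (f x)) := by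
  have h := hf.weak_smul hd (ζ := bmp d 1) (u := f) (bmp_contDiff (n := 1) 1) (bmp_compact one_pos) hf.1
  have e1 : ∀ x, bmp d 1 x * frob (cof f x) (fderiv ℝ f x) =
      d * (bmp d 1 x * ‖fderiv ℝ f x‖ ^ d) := by
    intro x
    rw [cof, frob_smul_left, (hf.2 x).frob_self]
    have : ‖fderiv ℝ f x‖ ^ d = ‖fderiv ℝ f x‖ ^ (d - 2) * ‖fderiv ℝ f x‖ ^ 2 := by
      rw [← pow_add]; congr 1; omega
    rw [this]; ring
  have e2 : ∀ x, inner ℝ (cof f x (gr (fderiv ℝ (bmp d 1) x))) (f x) =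
      -2 * (ker d 1 x * (‖fderiv ℝ f x‖ ^ (d - 2) * inner ℝ (fderiv ℝ f x x) (f x))) := by
    intro x
    rw [gr_bmp, cof]
    simp [inner_smul_left]; ring
  simp_rw [e1, e2] at h
  rw [integral_const_mul, integral_const_mul] at h
  rw [h]; ring

lemma conf_id (hd : 2 ≤ d) : Conf (fun x : Eu d => x) := by
  have : Nontrivial (Eu d) := by
    have : NeZero d := ⟨by omega⟩
    infer_instance
  refine ⟨contDiff_id, fun x => ?_⟩
  simp only [fderiv_id']
  refine ⟨by simp, fun v => by simp⟩

lemma intg {F : Eu d → ℝ} (hF : Continuous F) : Integrable fun x => ker d 1 x * F x :=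
  integrable_of_zero ((continuous_ker 1).mul hF) (bmp_compact (k := (1:ℝ) ^ 2) (by positivity))
      fun x hx => by rw [ker_zero one_pos hx, zero_mul]

lemma intb {F : Eu d → ℝ} (hF : Continuous F) : Integrable fun x => bmp d 1 x * F x :=
  integrable_of_zero ((bmp_contDiff (n := 0) 1).continuous.mul hF) (bmp_compact (k := 1) (by positivity))
      fun x hx => by rw [image_eq_zero_of_notMem_tsupport hx, zero_mul]

lemma ker_nonneg (x : Eu d) : 0 ≤ ker d 1 x := by
  unfold ker; exact mul_nonneg (by positivity) (g1_nonneg _)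

lemma bmp_le_ker (x : Eu d) : bmp d 1 x ≤ ker d 1 x := by
  unfold ker bmp
  simp only [one_pow, one_mul]
  exact g_le_g1 (by nlinarith [sq_nonneg ‖x‖])

lemma deficit {f : Eu d → Eu d} (hf : Conf f) (hd : 2 ≤ d) (h1 : ∀ x, ‖fderiv ℝ f x‖ ≤ 1) {ε : ℝ}
    (h0 : 1 - ε ≤ ‖fderiv ℝ f 0‖ ^ d) :
    2 * ∫ x, ker d 1 x * (‖x‖ * (‖x‖ - ‖f x‖)) ≤ d * (ε * ∫ x, ker d 1 x) := by
  have hlc := lamd_cont hf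
  have hfc := hf.1.continuous
  have hF := hf.continuous_fderiv
  have hk : Integrable (ker d 1) := by simpa using intg (d := d) (F := fun _ => 1) continuous_const
  have hb : Integrable (bmp d 1) := by simpa using intb (d := d) (F := fun _ => 1) continuous_const
  have s1 := energy hf hd
  have s2 := energy (conf_id hd) hd
  have : Nontrivial (Eu d) := by
    have : NeZero d := ⟨by omega⟩
    infer_instance
  simp only [fderiv_id', ContinuousLinearMap.norm_id, one_pow, mul_one, one_mul,
    ContinuousLinearMap.id_apply, real_inner_self_eq_norm_sq] at s2
  have c1 : Continuous fun x => ‖fderiv ℝ f x‖ ^ (d - 2) * inner ℝ (fderiv ℝ f x x) (f x) := by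
    fun_prop
  have s3 : ∫ x, ker d 1 x * (‖fderiv ℝ f x‖ ^ (d - 2) * inner ℝ (fderiv ℝ f x x) (f x)) ≤
      ∫ x, ker d 1 x * (‖x‖ * ‖f x‖) := by
    refine integral_mono (intg c1) (intg (by fun_prop)) fun x => ?_
    refine mul_le_mul_of_nonneg_left ?_ (ker_nonneg x)
    have i1 : inner ℝ (fderiv ℝ f x x) (f x) ≤ ‖x‖ * ‖f x‖ := by
      refine (real_inner_le_norm _ _).trans ?_
      gcongr
      rw [(hf.2 x).2]
      exact mul_le_of_le_one_left (norm_nonneg _) (h1 x)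
    have i2 : ‖fderiv ℝ f x‖ ^ (d - 2) ≤ 1 := pow_le_one₀ (norm_nonneg _) (h1 x)
    have i3 : 0 ≤ ‖fderiv ℝ f x‖ ^ (d - 2) := by positivity
    have i4 : 0 ≤ ‖x‖ * ‖f x‖ := by positivity
    nlinarith
  have s4 : ∫ x, bmp d 1 x * (1 - ‖fderiv ℝ f x‖ ^ d) ≤ ∫ x, ker d 1 x * (1 - ‖fderiv ℝ f x‖ ^ d) := by
    refine integral_mono (intb (by fun_prop)) (intg (by fun_prop)) fun x => ?_
    refine mul_le_mul_of_nonneg_right (bmp_le_ker x) ?_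
    have := pow_le_one₀ (n := d) (norm_nonneg _) (h1 x)
    linarith
  have s5 := submean hf hd h1
  have s6 : 0 ≤ ∫ x, ker d 1 x := integral_nonneg ker_nonneg
  have e1 : ∫ x, bmp d 1 x * (1 - ‖fderiv ℝ f x‖ ^ d) =
      (∫ x, bmp d 1 x) - ∫ x, bmp d 1 x * ‖fderiv ℝ f x‖ ^ d := by
    simp only [mul_sub, mul_one]
    exact integral_sub hb (intb hlc)
  have e2 : ∫ x, ker d 1 x * (1 - ‖fderiv ℝ f x‖ ^ d) =
      (∫ x, ker d 1 x) - ∫ x, ‖fderiv ℝ f x‖ ^ d * ker d 1 x := by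
    simp only [mul_sub, mul_one, mul_comm (‖fderiv ℝ f _‖ ^ d)]
    exact integral_sub hk (intg hlc)
  have e3 : ∫ x, ker d 1 x * (‖x‖ * (‖x‖ - ‖f x‖)) =
      (∫ x, ker d 1 x * ‖x‖ ^ 2) - ∫ x, ker d 1 x * (‖x‖ * ‖f x‖) := by
    rw [← integral_sub (intg (by fun_prop)) (intg (by fun_prop))]
    congr 1; ext x; ring
  rw [e1, e2] at s4
  rw [e3]
  have hd0 : (0 : ℝ) ≤ d := by positivity
  have s7 : (∫ x, bmp d 1 x) - ∫ x, bmp d 1 x * ‖fderiv ℝ f x‖ ^ d ≤ ε * ∫ x, ker d 1 x := by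
    nlinarith
  have s8 := mul_le_mul_of_nonneg_left s7 hd0
  linarith

lemma near_max (hd : 2 ≤ d) : ∃ ε > 0, ∀ f : Eu d → Eu d, Conf f → (∀ x, ‖fderiv ℝ f x‖ ≤ 1) →
    f 0 = 0 → 1 - ε ≤ ‖fderiv ℝ f 0‖ ^ d → ∀ x, ‖x‖ = 1 / 2 → 1 / 4 ≤ ‖f x‖ := by
  set I := ∫ x, ker d 1 x with hI
  have hI0 : 0 ≤ I := integral_nonneg ker_nonneg
  set c := expNegInvGlue (1 / 2) with hc
  have hc0 : 0 < c := expNegInvGlue.pos_of_pos (by norm_num)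
  set V := (volume : Measure (Eu d)).real (ball 0 (1 / 16)) with hV
  have hV0 : 0 < V := by
    rw [hV, Measure.real]
    exact ENNReal.toReal_pos (measure_ball_pos _ _ (by norm_num)).ne' measure_ball_lt_top.ne
  set κ := 2 * (c * (7 / 128)) * V with hκ
  have hκ0 : 0 < κ := by positivity
  refine ⟨κ / (2 * (d * I + 1)), by positivity, fun f hf h1 h0 hm x1 hx1 => ?_⟩
  by_contra! hlt
  have hdef := deficit hf hd h1 hm
  rw [← hI] at hdef
  have hup : d * (κ / (2 * (d * I + 1)) * I) < κ := by
    have hdI : 0 ≤ d * I := by positivity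
    have : d * (κ / (2 * (d * I + 1)) * I) = κ * (d * I) / (2 * (d * I + 1)) := by ring
    rw [this, div_lt_iff₀ (by positivity)]
    nlinarith
  have hfc := hf.1.continuous
  have lip := lip_of_fderiv hf.differentiable h1
  have hnn : ∀ x, 0 ≤ ker d 1 x * (‖x‖ * (‖x‖ - ‖f x‖)) := fun x => by
    have := lip x 0
    simp only [h0, sub_zero, one_mul] at this
    exact mul_nonneg (ker_nonneg x) (mul_nonneg (norm_nonneg _) (by linarith))
  have hIntg : Integrable fun x => ker d 1 x * (‖x‖ * (‖x‖ - ‖f x‖)) := intg (by fun_prop)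
  have hlow : c * (7 / 128) * V ≤ ∫ x, ker d 1 x * (‖x‖ * (‖x‖ - ‖f x‖)) := by
    calc c * (7 / 128) * V = ∫ x in ball x1 (1 / 16), c * (7 / 128) := by
          rw [setIntegral_const, smul_eq_mul, mul_comm, hV]
          congr 1
          rw [Measure.real, Measure.real, Measure.addHaar_ball_center volume x1]
      _ ≤ ∫ x in ball x1 (1 / 16), ker d 1 x * (‖x‖ * (‖x‖ - ‖f x‖)) := by
          refine setIntegral_mono_on (integrableOn_const measure_ball_lt_top.ne)
            hIntg.integrableOn measurableSet_ball fun x hx => ?_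
          rw [mem_ball, dist_eq_norm] at hx
          have a1 : ‖x‖ ≤ 9 / 16 := by
            have := norm_add_le (x - x1) x1; rw [sub_add_cancel] at this; linarith
          have a2 : 7 / 16 ≤ ‖x‖ := by
            have := norm_sub_norm_le x1 x; rw [norm_sub_rev] at this; linarith
          have a3 : ‖f x‖ ≤ 5 / 16 := by
            have := norm_add_le (f x - f x1) (f x1); rw [sub_add_cancel] at this
            linarith [lip x x1]
          have a4 : c ≤ ker d 1 x := by
            refine le_trans ?_ (bmp_le_ker x)
            unfold bmp
            exact expNegInvGlue.monotone (by nlinarith)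
          have a5 : 7 / 128 ≤ ‖x‖ * (‖x‖ - ‖f x‖) := by nlinarith
          exact mul_le_mul a4 a5 (by norm_num) (ker_nonneg x)
      _ ≤ _ := setIntegral_le_integral hIntg (Eventually.of_forall hnn)
  rw [hκ] at hup
  linarith

lemma Conf.affine {f : Eu d → Eu d} (hf : Conf f) {a s : ℝ} (ha : 0 < a) (hs : 0 < s) (x0 : Eu d) :
    Conf (fun z => a • (f (x0 + s • z) - f x0)) ∧
    ∀ z, ‖fderiv ℝ (fun z => a • (f (x0 + s • z) - f x0)) z‖ = a * s * ‖fderiv ℝ f (x0 + s • z)‖ := by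
  have hd : ∀ z, fderiv ℝ (fun z => a • (f (x0 + s • z) - f x0)) z = (a * s) • fderiv ℝ f (x0 + s • z) := by
    intro z
    have h1 : HasFDerivAt (fun z : Eu d => x0 + s • z) (s • ContinuousLinearMap.id ℝ (Eu d)) z :=
      ((hasFDerivAt_id z).const_smul s).const_add x0
    have h2 := (((hf.differentiable (x0 + s • z)).hasFDerivAt.comp z h1).sub_const (f x0)).const_smul a
    have h3 := h2.fderiv
    simp only [Function.comp_def] at h3
    refine Eq.trans h3 ?_
    ext v; simp; ring
  have hn : ∀ z, ‖fderiv ℝ (fun z => a • (f (x0 + s • z) - f x0)) z‖ = a * s * ‖fderiv ℝ f (x0 + s • z)‖ := by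
    intro z
    rw [hd, norm_smul, Real.norm_of_nonneg (by positivity)]
  refine ⟨⟨?_, fun z => ⟨?_, fun v => ?_⟩⟩, hn⟩
  · have := hf.1
    fun_prop
  · rw [hn]; have := (hf.2 (x0 + s • z)).1; positivity
  · rw [hn, hd, ContinuousLinearMap.smul_apply, norm_smul, (hf.2 _).2, Real.norm_of_nonneg (by positivity)]
    ring

lemma Conf.proper {f : Eu d → Eu d} (hf : Conf f) (hd : 2 ≤ d) {C : ℝ}
    (h1 : ∀ x, ‖fderiv ℝ f x‖ ≤ C) : ∃ x0, ∃ c > 0, ∀ x, c * ‖x - x0‖ ≤ ‖f x - f x0‖ := by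
  obtain ⟨ε, hε, H⟩ := near_max hd
  set Λ := ⨆ x, ‖fderiv ℝ f x‖ with hΛ
  have hbdd : BddAbove (Set.range fun x => ‖fderiv ℝ f x‖) := ⟨C, by rintro _ ⟨x, rfl⟩; exact h1 x⟩
  have hle : ∀ x, ‖fderiv ℝ f x‖ ≤ Λ := fun x => le_ciSup hbdd x
  have hΛ0 : 0 < Λ := (hf.2 0).1.trans_le (hle 0)
  have hcont : Tendsto (fun t : ℝ => (t / Λ) ^ d) (𝓝[<] Λ) (𝓝 1) := by
    have : ContinuousAt (fun t : ℝ => (t / Λ) ^ d) Λ := by fun_prop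
    have h := this.tendsto
    simp only [div_self hΛ0.ne', one_pow] at h
    exact h.mono_left nhdsWithin_le_nhds
  obtain ⟨t, ht1, ht0, ht⟩ := ((hcont.eventually (lt_mem_nhds (show 1 - ε < 1 by linarith))).and
    ((show ∀ᶠ t in 𝓝[<] Λ, 0 < t from (eventually_gt_nhds hΛ0).filter_mono nhdsWithin_le_nhds).and
      self_mem_nhdsWithin)).exists
  obtain ⟨x0, hx0⟩ := exists_lt_of_lt_ciSup (show t < ⨆ x, ‖fderiv ℝ f x‖ from ht)
  refine ⟨x0, Λ / 2, by positivity, fun x => ?_⟩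
  rcases eq_or_ne x x0 with rfl | hne
  · simp
  have hn : 0 < ‖x - x0‖ := norm_pos_iff.2 (sub_ne_zero.2 hne)
  set R := 2 * ‖x - x0‖ with hR
  have hR0 : 0 < R := by positivity
  obtain ⟨k1, k2⟩ := hf.affine (a := (Λ * R)⁻¹) (s := R) (by positivity) hR0 x0
  have hh := H _ k1 (fun z => ?_) (by simp) ?_ (R⁻¹ • (x - x0)) ?_
  · simp only [smul_inv_smul₀ hR0.ne', add_sub_cancel] at hh
    rw [norm_smul, Real.norm_of_nonneg (by positivity), inv_mul_eq_div, le_div_iff₀ (by positivity)] at hh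
    rw [hR] at hh
    linarith
  · rw [k2]
    have : (Λ * R)⁻¹ * R = Λ⁻¹ := by field_simp
    rw [this, inv_mul_le_iff₀ hΛ0, mul_one]
    exact hle _
  · rw [k2]
    have : (Λ * R)⁻¹ * R = Λ⁻¹ := by field_simp
    rw [this, smul_zero, add_zero, inv_mul_eq_div]
    refine ht1.le.trans ?_
    have ht0 : 0 < t := ht0
    gcongr
  · rw [norm_smul, norm_inv, Real.norm_of_nonneg hR0.le, hR]
    field_simp

end ConfLemma

namespace ConfLemma
variable {d : ℕ}

lemma Conf.localHomeo {f : Eu d → Eu d} (hf : Conf f) : IsLocalHomeomorph f := by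
  refine IsLocalHomeomorph.mk f fun x => ?_
  obtain ⟨e, he⟩ := (hf.2 x).exists_equiv
  have hx : HasFDerivAt f (e : Eu d →L[ℝ] Eu d) x := by
    rw [he]; exact (hf.differentiable x).hasFDerivAt
  exact ⟨hf.1.contDiffAt.toOpenPartialHomeomorph f hx one_ne_zero,
    hf.1.contDiffAt.mem_toOpenPartialHomeomorph_source hx one_ne_zero, fun _ _ => rfl⟩

lemma finite_fiber {f : Eu d → Eu d} (hf : IsLocalHomeomorph f) (y : Eu d)
    (hc : IsCompact (f ⁻¹' {y})) : (f ⁻¹' {y}).Finite := by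
  choose e he hfe using hf
  obtain ⟨t, ht, hsub⟩ := hc.elim_nhds_subcover (fun x => (e x).source)
    fun x _ => (e x).open_source.mem_nhds (he x)
  refine t.finite_toSet.subset fun z hz => ?_
  obtain ⟨x, hx, hzx⟩ := Set.mem_iUnion₂.1 (hsub hz)
  have h1 : f z = f x := by
    have a1 : f z = y := hz
    have a2 : f x = y := ht x hx
    rw [a1, a2]
  have : z = x := (e x).injOn hzx (he x) (by rw [← hfe x]; exact h1)
  rw [this]; exact hx

lemma Conf.inverse {f : Eu d → Eu d} (hf : Conf f) (hd : 2 ≤ d) {C : ℝ}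
    (h1 : ∀ x, ‖fderiv ℝ f x‖ ≤ C) :
    ∃ g : Eu d → Eu d, Continuous g ∧ (∀ x, f (g x) = x) ∧ ∀ x, g (f x) = x := by
  obtain ⟨x0, c, hc, hp⟩ := hf.proper hd h1
  have hcont := hf.1.continuous
  have hproper : IsProperMap f := by
    rw [isProperMap_iff_isCompact_preimage]
    refine ⟨hcont, fun K hK => ?_⟩
    refine Metric.isCompact_of_isClosed_isBounded (hK.isClosed.preimage hcont) ?_
    obtain ⟨R, hR⟩ := hK.isBounded.subset_closedBall (f x0)
    refine (isBounded_closedBall (x := x0) (r := R / c)).subset fun x hx => ?_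
    have := hR hx
    rw [mem_closedBall, dist_eq_norm] at this ⊢
    rw [le_div_iff₀ hc]
    linarith [hp x]
  have hcov : IsCoveringMap f := isCoveringMap_iff_isCoveringMapOn_univ.2
    (hproper.isClosedMap.isCoveringMapOn_of_isLocalHomeomorphOn
      (fun x _ => finite_fiber hf.localHomeo x (hproper.isCompact_preimage isCompact_singleton))
      (hf.localHomeo.isLocalHomeomorphOn))
  obtain ⟨g, ⟨hg0, hg⟩, -⟩ := hcov.existsUnique_continuousMap_lifts (ContinuousMap.id (Eu d)) (f 0) 0 rfl
  have hfg : ∀ x, f (g x) = x := fun x => congrFun hg x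
  refine ⟨g, g.continuous, hfg, ?_⟩
  have hgl : IsLocalHomeomorph g := by
    refine IsLocalHomeomorph.of_comp (g := f) ?_ hf.localHomeo g.continuous
    rw [hg]
    exact (Homeomorph.refl (Eu d)).isLocalHomeomorph
  have hr : Set.range g = {x | g (f x) = x} := by
    ext x; constructor
    · rintro ⟨y, rfl⟩; simp [hfg]
    · intro h; exact ⟨_, h⟩
  have hclosed : IsClosed (Set.range g) := by
    rw [hr]; exact isClosed_eq (g.continuous.comp hcont) continuous_id
  have hun : Set.range g = Set.univ :=
    IsClopen.eq_univ ⟨hclosed, hgl.isOpenMap.isOpen_range⟩ ⟨_, ⟨0, rfl⟩⟩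
  intro x
  have : x ∈ Set.range g := by rw [hun]; trivial
  rwa [hr] at this

lemma lower_two {f : Eu d → Eu d} (hf : Conf f) (hd : 2 ≤ d) {C : ℝ}
    (h1 : ∀ x, ‖fderiv ℝ f x‖ ≤ C) {s : ℝ} (hs : 0 < s) {y : Eu d}
    (hlow : ∀ x ∈ closedBall y 1, s ≤ ‖fderiv ℝ f x‖) (z : Eu d) :
    min ‖z - y‖ 1 * s ≤ 2 * ‖f z - f y‖ := by
  obtain ⟨g, hgc, hfg, hgf⟩ := hf.inverse hd h1
  rcases eq_or_ne (f z) (f y) with heq | hne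
  · have : z = y := by rw [← hgf z, heq, hgf]
    simp [this]
  have hv0 : 0 < ‖f z - f y‖ := norm_pos_iff.2 (sub_ne_zero.2 hne)
  set v := f z - f y with hv
  by_cases hbig : s ≤ 2 * ‖v‖
  · have : min ‖z - y‖ 1 ≤ 1 := min_le_right _ _
    nlinarith
  push Not at hbig
  have hder : ∀ a : Eu d, ∃ G : Eu d →L[ℝ] Eu d, HasFDerivAt g G a ∧
      ∀ w, ‖G w‖ * ‖fderiv ℝ f (g a)‖ = ‖w‖ := by
    intro a
    obtain ⟨e, he⟩ := (hf.2 (g a)).exists_equiv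
    refine ⟨(e.symm : Eu d →L[ℝ] Eu d), HasFDerivAt.of_local_left_inverse hgc.continuousAt ?_
      (Eventually.of_forall hfg), fun w => ?_⟩
    · rw [he]; exact (hf.differentiable _).hasFDerivAt
    · have := (hf.2 (g a)).2 (e.symm w)
      rw [← he] at this ⊢
      simp only [ContinuousLinearEquiv.coe_coe, ContinuousLinearEquiv.apply_symm_apply] at this ⊢
      rw [this, mul_comm]
  choose G hG hGn using hder
  have hpath : ∀ t : ℝ, HasDerivAt (fun t : ℝ => g (f y + t • v) - y) (G (f y + t • v) v) t := by
    intro t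
    have a1 : HasDerivAt (fun t : ℝ => f y + t • v) v t := by
      simpa using ((hasDerivAt_id t).smul_const v).const_add (f y)
    exact ((hG _).comp_hasDerivAt t a1).sub_const y
  have key := image_norm_le_of_norm_deriv_right_lt_deriv_boundary (a := (0 : ℝ)) (b := 1)
    (f := fun t : ℝ => g (f y + t • v) - y) (f' := fun t => G (f y + t • v) v)
    (B := fun t => t * (2 * ‖v‖ / s)) (B' := fun _ => 2 * ‖v‖ / s)
    (fun t _ => (hpath t).continuousAt.continuousWithinAt)
    (fun t _ => (hpath t).hasDerivWithinAt) (by simp [hgf])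
    (fun t => by simpa using (hasDerivAt_id t).mul_const (2 * ‖v‖ / s)) ?_
    (Set.right_mem_Icc.2 zero_le_one)
  · simp only [one_smul, one_mul] at key
    have e : f y + v = f z := by rw [hv]; abel
    rw [e, hgf, le_div_iff₀ hs] at key
    have : min ‖z - y‖ 1 ≤ ‖z - y‖ := min_le_left _ _
    nlinarith
  · intro t ht hteq
    have hb : 2 * ‖v‖ / s ≤ 1 := by rw [div_le_one hs]; exact hbig.le
    have hmem : g (f y + t • v) ∈ closedBall y 1 := by
      rw [mem_closedBall, dist_eq_norm, hteq]
      have : 0 ≤ 2 * ‖v‖ / s := by positivity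
      nlinarith [ht.1, ht.2]
    have h3 := hlow _ hmem
    have h4 := hGn (f y + t • v) v
    rw [lt_div_iff₀ hs]
    have h5 : ‖G (f y + t • v) v‖ * s ≤ ‖v‖ := by
      rw [← h4]; gcongr
    linarith

lemma lower_one {f : Eu d → Eu d} (hf : Conf f) (hd : d < 2) {s : ℝ} (hs : 0 < s) {y z : Eu d}
    (hlow : ∀ x ∈ segment ℝ y z, s ≤ ‖fderiv ℝ f x‖) :
    ‖z - y‖ * s ≤ ‖f z - f y‖ := by
  obtain rfl | rfl : d = 0 ∨ d = 1 := by omega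
  · have : z = y := by ext i; exact i.elim0
    simp [this]
  have hn : ∀ v : Eu 1, ‖v‖ = |v 0| := fun v => by
    rw [EuclideanSpace.norm_eq]; simp [Real.sqrt_sq_eq_abs]
  have hpath : ∀ t : ℝ, HasDerivAt (fun t : ℝ => f (y + t • (z - y)) 0)
      (fderiv ℝ f (y + t • (z - y)) (z - y) 0) t := by
    intro t
    have a1 : HasDerivAt (fun t : ℝ => y + t • (z - y)) (z - y) t := by
      simpa using ((hasDerivAt_id t).smul_const (z - y)).const_add y
    have a2 := (hf.differentiable (y + t • (z - y))).hasFDerivAt.comp_hasDerivAt t a1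
    exact (EuclideanSpace.proj (𝕜 := ℝ) (0 : Fin 1)).hasFDerivAt.comp_hasDerivAt t a2
  obtain ⟨t, ht, hteq⟩ := exists_hasDerivAt_eq_slope (fun t : ℝ => f (y + t • (z - y)) 0) _ zero_lt_one
    (fun t _ => (hpath t).continuousAt.continuousWithinAt) (fun t _ => hpath t)
  simp only [one_smul, zero_smul, add_zero, sub_zero, div_one, add_sub_cancel] at hteq
  have h1 : ‖f z - f y‖ = ‖fderiv ℝ f (y + t • (z - y)) (z - y)‖ := by
    rw [hn, hn, hteq]; simp
  rw [h1, (hf.2 _).2, mul_comm]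
  gcongr
  apply hlow
  rw [segment_eq_image']
  exact ⟨t, ⟨ht.1.le, ht.2.le⟩, rfl⟩

lemma lower_bound {f : Eu d → Eu d} (hf : Conf f) {C : ℝ}
    (h1 : ∀ x, ‖fderiv ℝ f x‖ ≤ C) {s R : ℝ} (hs : 0 < s)
    (hlow : ∀ x ∈ closedBall (0 : Eu d) R, s ≤ ‖fderiv ℝ f x‖) {y z : Eu d}
    (hy : ‖y‖ + 1 ≤ R) (hz : ‖z‖ + 1 ≤ R) :
    min ‖z - y‖ 1 * s ≤ 2 * ‖f z - f y‖ := by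
  rcases lt_or_ge d 2 with hd | hd
  · have := lower_one hf hd hs (y := y) (z := z) fun x hx => hlow x
      ((convex_closedBall (0 : Eu d) R).segment_subset (by simp; linarith) (by simp; linarith) hx)
    have h2 : min ‖z - y‖ 1 ≤ ‖z - y‖ := min_le_left _ _
    nlinarith [norm_nonneg (f z - f y)]
  · refine lower_two hf hd h1 hs (fun x hx => hlow x ?_) z
    rw [mem_closedBall, dist_eq_norm] at hx
    rw [mem_closedBall_zero_iff]
    have := norm_add_le (x - y) y
    rw [sub_add_cancel] at this
    linarith

end ConfLemma

namespace ConfLemma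
variable {d : ℕ} {A : Type*}

lemma wordMap_add (φ : A → Eu d → Eu d) (n k : ℕ) (a : ℕ → A) :
    wordMap φ (n + k) a = wordMap φ n a ∘ wordMap φ k (fun j => a (j + n)) := by
  induction n generalizing a with
  | zero => simp [wordMap]
  | succ n ih =>
    rw [show n + 1 + k = (n + k) + 1 by ring, wordMap, ih, wordMap, Function.comp_assoc]
    congr 3

lemma wordMap_congr (φ : A → Eu d → Eu d) (n : ℕ) {a a' : ℕ → A} (h : ∀ k < n, a k = a' k) :
    wordMap φ n a = wordMap φ n a' := by
  induction n generalizing a a' with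
  | zero => rfl
  | succ n ih =>
    rw [wordMap, wordMap, h 0 (by omega), ih fun k hk => h (k + 1) (by omega)]

lemma CL.nontrivial {F : Eu d →L[ℝ] Eu d} (h : CL F) : Nontrivial (Eu d) := by
  by_contra hn
  rw [not_nontrivial_iff_subsingleton] at hn
  have : F = 0 := Subsingleton.elim _ _
  have h0 := h.1
  simp [this] at h0

lemma Conf.comp {f g : Eu d → Eu d} (hf : Conf f) (hg : Conf g) :
    Conf (f ∘ g) ∧ ∀ x, ‖fderiv ℝ (f ∘ g) x‖ = ‖fderiv ℝ f (g x)‖ * ‖fderiv ℝ g x‖ := by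
  have h1 : ∀ x v, ‖fderiv ℝ (f ∘ g) x v‖ = ‖fderiv ℝ f (g x)‖ * ‖fderiv ℝ g x‖ * ‖v‖ := by
    intro x v
    rw [fderiv_comp x (hf.differentiable _) (hg.differentiable _), ContinuousLinearMap.comp_apply,
      (hf.2 _).2, (hg.2 _).2, mul_assoc]
  have h2 : ∀ x, ‖fderiv ℝ (f ∘ g) x‖ = ‖fderiv ℝ f (g x)‖ * ‖fderiv ℝ g x‖ := fun x => by
    have := (hf.2 x).nontrivial
    exact ContinuousLinearMap.homothety_norm _ (h1 x)
  refine ⟨⟨hf.1.comp hg.1, fun x => ⟨?_, fun v => ?_⟩⟩, h2⟩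
  · rw [h2]; exact mul_pos (hf.2 _).1 (hg.2 _).1
  · rw [h2, h1]

lemma conf_id_of {f : Eu d → Eu d} (hf : Conf f) : Conf (id : Eu d → Eu d) ∧
    ∀ x, ‖fderiv ℝ (id : Eu d → Eu d) x‖ = 1 := by
  have := (hf.2 0).nontrivial
  refine ⟨⟨contDiff_id, fun x => ⟨by simp, fun v => by simp⟩⟩, fun x => by simp⟩

lemma word_conf [Nonempty A] {φ : A → Eu d → Eu d} (h : ∀ a, Conf (φ a)) (n : ℕ) (a : ℕ → A) :
    Conf (wordMap φ n a) := by
  induction n generalizing a with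
  | zero => exact (conf_id_of (h (Classical.arbitrary A))).1
  | succ n ih => exact ((h _).comp (ih _)).1

lemma word_lip {φ : A → Eu d → Eu d} {r : ℝ} (hr : 0 ≤ r)
    (h : ∀ a x y, ‖φ a x - φ a y‖ ≤ r * ‖x - y‖) (n : ℕ) (a : ℕ → A) (x y : Eu d) :
    ‖wordMap φ n a x - wordMap φ n a y‖ ≤ r ^ n * ‖x - y‖ := by
  induction n generalizing a with
  | zero => simp [wordMap]
  | succ n ih =>
    calc _ ≤ r * ‖wordMap φ n (fun k => a (k + 1)) x - wordMap φ n (fun k => a (k + 1)) y‖ := h _ _ _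
      _ ≤ r * (r ^ n * ‖x - y‖) := by gcongr; exact ih _
      _ = _ := by ring

lemma word_mem {φ : A → Eu d → Eu d} {K : Set (Eu d)} (h : ∀ a, ∀ x ∈ K, φ a x ∈ K) (n : ℕ)
    (a : ℕ → A) {x : Eu d} (hx : x ∈ K) : wordMap φ n a x ∈ K := by
  induction n generalizing a with
  | zero => exact hx
  | succ n ih => exact h _ _ (ih _)

lemma fderiv_norm_le_of_lip {f : Eu d → Eu d} {r : ℝ} (hr : 0 ≤ r)
    (h : ∀ x y, ‖f x - f y‖ ≤ r * ‖x - y‖) (x : Eu d) : ‖fderiv ℝ f x‖ ≤ r := by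
  have : LipschitzWith ⟨r, hr⟩ f := LipschitzWith.of_dist_le_mul fun x y => by
    rw [dist_eq_norm, dist_eq_norm]; exact h x y
  exact norm_fderiv_le_of_lipschitz ℝ this

/-- The package of uniform estimates for a self-conformal IFS. -/
lemma package [Fintype A] {φ : A → Eu d → Eu d} (hΦ : IsSelfConformalIFS φ) {X : Set (Eu d)}
    (hXc : IsCompact X) :
    ∃ R C m r : ℝ, 1 ≤ R ∧ 1 ≤ C ∧ 0 < m ∧ m ≤ 1 ∧ 0 < r ∧ r < 1 ∧ (∀ a, Conf (φ a)) ∧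
      (∀ x ∈ X, ‖x‖ + 1 ≤ R) ∧
      (∀ n a, ∀ x ∈ closedBall (0 : Eu d) R, wordMap φ n a x ∈ closedBall (0 : Eu d) R) ∧
      (∀ n a, ∀ x ∈ closedBall (0 : Eu d) R, ∀ y ∈ closedBall (0 : Eu d) R,
        ‖fderiv ℝ (wordMap φ n a) x‖ ≤ C * ‖fderiv ℝ (wordMap φ n a) y‖) ∧
      (∀ n a x, ‖fderiv ℝ (wordMap φ n a) x‖ ≤ r ^ n) ∧
      (∀ n a, ∀ x ∈ closedBall (0 : Eu d) R, m ^ n ≤ ‖fderiv ℝ (wordMap φ n a) x‖) := by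
  obtain ⟨hcard, hcontr, hC1, hCL, ⟨H, α, hH, hα, hHol⟩, -⟩ := hΦ
  have hAne : Nonempty A := Fintype.card_pos_iff.1 (by omega)
  have hconf : ∀ a, Conf (φ a) := fun a => ⟨hC1 a, fun x => hCL a x⟩
  choose ra hra using hcontr
  obtain ⟨a0, ha0⟩ := Finite.exists_max ra
  set r := ra a0 with hr
  have hr0 : 0 < r := (hra a0).1
  have hr1 : r < 1 := (hra a0).2.1
  have hlip : ∀ a x y, ‖φ a x - φ a y‖ ≤ r * ‖x - y‖ := fun a x y =>
    ((hra a).2.2 x y).trans (mul_le_mul_of_nonneg_right (ha0 a) (norm_nonneg _))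
  obtain ⟨a1, ha1⟩ := Finite.exists_max fun a => ‖φ a 0‖
  obtain ⟨R0, hR0⟩ := hXc.isBounded.exists_norm_le
  set R := max (max 1 (R0 + 1)) (‖φ a1 0‖ / (1 - r)) with hR
  have hR1 : 1 ≤ R := (le_max_left _ _).trans (le_max_left _ _)
  have hR2 : R0 + 1 ≤ R := (le_max_right _ _).trans (le_max_left _ _)
  have hR3 : ‖φ a1 0‖ / (1 - r) ≤ R := le_max_right _ _
  rw [div_le_iff₀ (by linarith)] at hR3
  have hK : ∀ a, ∀ x ∈ closedBall (0 : Eu d) R, φ a x ∈ closedBall (0 : Eu d) R := by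
    intro a x hx
    rw [mem_closedBall_zero_iff] at hx ⊢
    have h1 := hlip a x 0
    have h2 := norm_add_le (φ a x - φ a 0) (φ a 0)
    rw [sub_add_cancel] at h2
    rw [sub_zero] at h1
    have h3 : ‖φ a 0‖ ≤ ‖φ a1 0‖ := ha1 a
    nlinarith
  have hKw : ∀ n a, ∀ x ∈ closedBall (0 : Eu d) R, wordMap φ n a x ∈ closedBall (0 : Eu d) R :=
    fun n a x hx => word_mem hK n a hx
  have hmin : ∀ a, ∃ m > 0, ∀ x ∈ closedBall (0 : Eu d) R, m ≤ ‖fderiv ℝ (φ a) x‖ := fun a => by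
    obtain ⟨m, hm, h⟩ := exists_low (hconf a) R (by linarith) 1
    exact ⟨m, hm, by simpa using h⟩
  choose ma hma0 hma using hmin
  obtain ⟨a2, ha2⟩ := Finite.exists_min ma
  set m := ma a2 with hm
  have hm0 : 0 < m := hma0 a2
  have hml : ∀ a, ∀ x ∈ closedBall (0 : Eu d) R, m ≤ ‖fderiv ℝ (φ a) x‖ := fun a x hx =>
    (ha2 a).trans (hma a x hx)
  have hlr : ∀ a x, ‖fderiv ℝ (φ a) x‖ ≤ r := fun a x => fderiv_norm_le_of_lip hr0.le (hlip a) x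
  have hm1 : m ≤ 1 := (hml a0 0 (by simp; linarith)).trans ((hlr a0 0).trans hr1.le)
  have hwn : ∀ n a x, ‖fderiv ℝ (wordMap φ (n + 1) a) x‖ =
      ‖fderiv ℝ (φ (a 0)) (wordMap φ n (fun k => a (k + 1)) x)‖ *
        ‖fderiv ℝ (wordMap φ n (fun k => a (k + 1))) x‖ := fun n a x =>
    ((hconf (a 0)).comp (word_conf hconf n _)).2 x
  have hw0 : ∀ a x, ‖fderiv ℝ (wordMap φ 0 a) x‖ = 1 := fun a x => (conf_id_of (hconf a0)).2 x
  set q := r ^ α with hq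
  have hq0 : 0 ≤ q := Real.rpow_nonneg hr0.le _
  have hq1 : q < 1 := Real.rpow_lt_one hr0.le hr1 hα
  set B := H / m * (2 * R) ^ α with hB
  have hB0 : 0 ≤ B := by positivity
  have step : ∀ n (a : ℕ → A) (b : A), ∀ x ∈ closedBall (0 : Eu d) R, ∀ y ∈ closedBall (0 : Eu d) R,
      ‖fderiv ℝ (φ b) (wordMap φ n a x)‖ ≤ Real.exp (B * q ^ n) * ‖fderiv ℝ (φ b) (wordMap φ n a y)‖ := by
    intro n a b x hx y hy
    have h1 := (abs_le.1 (hHol b (wordMap φ n a x) (wordMap φ n a y))).2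
    have h2 := word_lip hr0.le hlip n a x y
    have h3 : ‖x - y‖ ≤ 2 * R := by
      rw [mem_closedBall_zero_iff] at hx hy
      linarith [norm_sub_le x y]
    have h4 : ‖wordMap φ n a x - wordMap φ n a y‖ ^ α ≤ q ^ n * (2 * R) ^ α := by
      calc _ ≤ (r ^ n * (2 * R)) ^ α := by
            refine Real.rpow_le_rpow (norm_nonneg _) (h2.trans ?_) hα.le
            gcongr
        _ = (r ^ n) ^ α * (2 * R) ^ α := Real.mul_rpow (by positivity) (by positivity)
        _ = _ := by
            rw [hq, ← Real.rpow_natCast, ← Real.rpow_natCast, ← Real.rpow_mul hr0.le,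
              ← Real.rpow_mul hr0.le, mul_comm (n : ℝ)]
    have h5 := hml b _ (hKw n a y hy)
    have h6 : H * ‖wordMap φ n a x - wordMap φ n a y‖ ^ α ≤
        (B * q ^ n) * ‖fderiv ℝ (φ b) (wordMap φ n a y)‖ := by
      calc _ ≤ H * (q ^ n * (2 * R) ^ α) := by gcongr
        _ = (B * q ^ n) * m := by rw [hB]; field_simp
        _ ≤ _ := by gcongr
    have h7 := Real.add_one_le_exp (B * q ^ n)
    nlinarith [norm_nonneg (fderiv ℝ (φ b) (wordMap φ n a y))]
  have dist1 : ∀ n a, ∀ x ∈ closedBall (0 : Eu d) R, ∀ y ∈ closedBall (0 : Eu d) R,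
        ‖fderiv ℝ (wordMap φ n a) x‖ ≤
          Real.exp (∑ k ∈ Finset.range n, B * q ^ k) * ‖fderiv ℝ (wordMap φ n a) y‖ := by
    intro n
    induction n with
    | zero => intro a x _ y _; simp [hw0]
    | succ n ih =>
      intro a x hx y hy
      rw [hwn, hwn, Finset.sum_range_succ, Real.exp_add]
      calc _ ≤ (Real.exp (B * q ^ n) * ‖fderiv ℝ (φ (a 0)) (wordMap φ n (fun k => a (k + 1)) y)‖) *
            (Real.exp (∑ k ∈ Finset.range n, B * q ^ k) *
              ‖fderiv ℝ (wordMap φ n (fun k => a (k + 1))) y‖) := by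
            gcongr
            · exact step n _ _ x hx y hy
            · exact ih _ x hx y hy
        _ = _ := by ring
  have hsum : ∀ n, ∑ k ∈ Finset.range n, B * q ^ k ≤ B * (1 - q)⁻¹ := by
    intro n
    rw [← Finset.mul_sum]
    gcongr
    rw [← tsum_geometric_of_lt_one hq0 hq1]
    exact (summable_geometric_of_lt_one hq0 hq1).sum_le_tsum _ fun _ _ => by positivity
  refine ⟨R, Real.exp (B * (1 - q)⁻¹), m, r, hR1, ?_, hm0, hm1, hr0, hr1, hconf,
    fun x hx => (by linarith [hR0 x hx]), hKw, ?_, ?_, ?_⟩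
  · apply Real.one_le_exp
    have : 0 < 1 - q := by linarith
    positivity
  · intro n a x hx y hy
    refine (dist1 n a x hx y hy).trans ?_
    gcongr
    exact hsum n
  · intro n
    induction n with
    | zero => intro a x; simp [hw0]
    | succ n ih =>
      intro a x
      rw [hwn, pow_succ, mul_comm]
      gcongr
      · exact ih _ _
      · exact hlr _ _
  · intro n
    induction n with
    | zero => intro a x _; simp [hw0]
    | succ n ih =>
      intro a x hx
      rw [hwn, pow_succ, mul_comm]
      gcongr
      · exact hml _ _ (hKw n _ x hx)
      · exact ih _ _ hx

end ConfLemma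

namespace ConfLemma
variable {d : ℕ} {A : Type*}

lemma coding_mem {φ : A → Eu d → Eu d} {X : Set (Eu d)} (hXne : X.Nonempty) (hXc : IsCompact X)
    (hXinv : X = ⋃ a, φ a '' X) {cm : (ℕ → A) → Eu d}
    (hCoding : ∀ (a : ℕ → A) (x₀ : Eu d), Tendsto (fun n => wordMap φ n a x₀) atTop (nhds (cm a)))
    (a : ℕ → A) : cm a ∈ X := by
  obtain ⟨x0, hx0⟩ := hXne
  have hin : ∀ a, ∀ x ∈ X, φ a x ∈ X := fun a x hx => by
    rw [hXinv]; exact Set.mem_iUnion.2 ⟨a, x, hx, rfl⟩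
  exact hXc.isClosed.mem_of_tendsto (hCoding a x0)
    (Eventually.of_forall fun n => word_mem hin n a hx0)

lemma coding_shift {φ : A → Eu d → Eu d} {cm : (ℕ → A) → Eu d}
    (hCoding : ∀ (a : ℕ → A) (x₀ : Eu d), Tendsto (fun n => wordMap φ n a x₀) atTop (nhds (cm a)))
    {n : ℕ} {a : ℕ → A} (hc : Continuous (wordMap φ n a)) :
    cm a = wordMap φ n a (cm fun j => a (j + n)) := by
  have h1 := (tendsto_add_atTop_iff_nat n).2 (hCoding a 0)
  have h2 := (hc.tendsto _).comp (hCoding (fun j => a (j + n)) 0)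
  refine tendsto_nhds_unique h1 (h2.congr fun k => ?_)
  rw [add_comm k n, wordMap_add]; rfl

lemma coding_sep {φ : A → Eu d → Eu d} {X : Set (Eu d)} {cm : (ℕ → A) → Eu d}
    (hm : ∀ a, cm a ∈ X) (hs : ∀ a, cm a = φ (a 0) (cm fun j => a (j + 1)))
    {Ab : A → Set A} {c₁ : ℝ} (hsep : ∀ b : A, ∀ a ∈ Ab b, ∀ a' ∈ Ab b, a ≠ a' →
      c₁ ≤ setDist (φ a '' X) (φ a' '' X)) {b : ℕ → A} {a a' : ℕ → A} (ha : a ∈ cylSet Ab b)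
    (ha' : a' ∈ cylSet Ab b) (hne : a 0 ≠ a' 0) : c₁ ≤ ‖cm a - cm a'‖ := by
  refine (hsep (b 0) _ (ha 0) _ (ha' 0) hne).trans ?_
  rw [← dist_eq_norm]
  refine csInf_le ⟨0, ?_⟩ ?_
  · rintro _ ⟨x, -, y, -, rfl⟩; exact dist_nonneg
  · refine ⟨cm a, ?_, cm a', ?_, rfl⟩
    · rw [hs a]; exact ⟨_, hm _, rfl⟩
    · rw [hs a']; exact ⟨_, hm _, rfl⟩

lemma exists_pair {Ab : A → Set A} (hAb : ∀ b, (Ab b).Nontrivial) (b : ℕ → A) :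
    ∃ a ∈ cylSet Ab b, ∃ a' ∈ cylSet Ab b, a 0 ≠ a' 0 := by
  choose u hu v hv huv using fun b => (hAb b)
  exact ⟨fun n => u (b n), fun n => hu _, fun n => v (b n), fun n => hv _, huv _⟩

end ConfLemma

open ConfLemma

/-- Approximation lemma: locating balls between dynamical cylinders. -/
theorem approximation_lemma
    (d : ℕ) {A : Type*} [Fintype A]
    (φ : A → EuclideanSpace ℝ (Fin d) → EuclideanSpace ℝ (Fin d))
    (hΦ : IsSelfConformalIFS φ)
    (X : Set (EuclideanSpace ℝ (Fin d))) (hXne : X.Nonempty) (hXc : IsCompact X)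
    (hXinv : X = ⋃ a, φ a '' X)
    (codingMap : (ℕ → A) → EuclideanSpace ℝ (Fin d))
    (hCoding : ∀ (a : ℕ → A) (x₀ : EuclideanSpace ℝ (Fin d)),
      Filter.Tendsto (fun n => wordMap φ n a x₀) Filter.atTop (nhds (codingMap a)))
    (Ab : A → Set A) (hAb : ∀ b, (Ab b).Nontrivial)
    (c₁ : ℝ) (hc₁ : 0 < c₁)
    (hsep : ∀ b : A, ∀ a ∈ Ab b, ∀ a' ∈ Ab b, a ≠ a' →
      c₁ ≤ setDist (φ a '' X) (φ a' '' X)) :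
    ∃ (M : ℕ) (D : ℝ), 1 ≤ D ∧
      ∀ (b : ℕ → A) (r : ℝ), 0 < r → r < c₁ / 2 →
        ∀ x ∈ codingMap '' cylSet Ab b,
          ∃ a ∈ cylSet Ab b, ∃ N₁ N₂ : ℕ,
            1 ≤ N₁ ∧ N₁ < N₂ ∧ N₂ - N₁ ≤ M ∧
            (r / D ≤ Metric.diam
                (wordMap φ N₁ a '' (codingMap '' cylSet Ab fun n => b (n + N₁))) ∧
              Metric.diam
                (wordMap φ N₁ a '' (codingMap '' cylSet Ab fun n => b (n + N₁))) ≤ D * r) ∧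
            (r / D ≤ Metric.diam
                (wordMap φ N₂ a '' (codingMap '' cylSet Ab fun n => b (n + N₂))) ∧
              Metric.diam
                (wordMap φ N₂ a '' (codingMap '' cylSet Ab fun n => b (n + N₂))) ≤ D * r) ∧
            Metric.closedBall x (2 * r) ∩ (codingMap '' cylSet Ab b) ⊆
              wordMap φ N₁ a '' (codingMap '' cylSet Ab fun n => b (n + N₁)) ∧
            wordMap φ N₂ a '' (codingMap '' cylSet Ab fun n => b (n + N₂)) ⊆
              Metric.closedBall x r := by
  obtain ⟨R, C, m, q, hR, hC, hm, hm1, hq, hq1, hconf, hXR, hKw, hdist, hup, hlo⟩ := package hΦ hXc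
  have hAne : Nonempty A := Fintype.card_pos_iff.1 (by have := hΦ.1; omega)
  have hcw : ∀ n a, ConfLemma.Conf (wordMap φ n a) := word_conf hconf
  have hcmX : ∀ a, codingMap a ∈ X := coding_mem hXne hXc hXinv hCoding
  have hshift : ∀ n a, codingMap a = wordMap φ n a (codingMap fun j => a (j + n)) :=
    fun n a => coding_shift hCoding (hcw n a).1.continuous
  have hsepc : ∀ {b a a'}, a ∈ cylSet Ab b → a' ∈ cylSet Ab b → a 0 ≠ a' 0 →
      c₁ ≤ ‖codingMap a - codingMap a'‖ :=
    fun ha ha' hne => coding_sep hcmX (fun a => hshift 1 a) hsep ha ha' hne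
  set K := closedBall (0 : Eu d) R with hKdef
  have h0K : (0 : Eu d) ∈ K := by simp [hKdef]; linarith
  have hXK : ∀ x ∈ X, x ∈ K := fun x hx => by
    rw [hKdef, mem_closedBall_zero_iff]; linarith [hXR x hx]
  -- size of cylinder
  obtain ⟨l, hl⟩ : ∃ l : ℕ → (ℕ → A) → ℝ, ∀ n a, l n a = ‖fderiv ℝ (wordMap φ n a) 0‖ :=
    ⟨_, fun _ _ => rfl⟩
  have hl0 : ∀ n a, 0 < l n a := fun n a => by rw [hl]; exact ((hcw n a).2 0).1
  have hC0 : 0 < C := by linarith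
  -- upper estimate
  have hupper : ∀ n a, ∀ x ∈ X, ∀ y ∈ X, ‖wordMap φ n a x - wordMap φ n a y‖ ≤ C * l n a * (2 * R) := by
    intro n a x hx y hy
    have h1 := (convex_closedBall (0 : Eu d) R).norm_image_sub_le_of_norm_fderiv_le
      (f := wordMap φ n a) (C := C * l n a) (fun z _ => (hcw n a).differentiable z)
      (fun z hz => by rw [hl]; exact hdist n a z hz 0 h0K) (hXK y hy) (hXK x hx)
    refine h1.trans ?_
    have h2 : ‖x - y‖ ≤ 2 * R := by
      linarith [norm_sub_le x y, hXR x hx, hXR y hy]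
    have := hl0 n a
    gcongr
  -- lower estimate
  set κ := min c₁ 1 / (2 * C) with hκ
  have hκ0 : 0 < κ := by
    have : 0 < min c₁ 1 := lt_min hc₁ one_pos
    positivity
  have hκc : κ ≤ c₁ := by
    rw [hκ, div_le_iff₀ (by positivity)]
    have : min c₁ 1 ≤ c₁ := min_le_left _ _
    nlinarith
  have hlower : ∀ n a, ∀ x ∈ X, ∀ y ∈ X, c₁ ≤ ‖x - y‖ →
      κ * l n a ≤ ‖wordMap φ n a x - wordMap φ n a y‖ := by
    intro n a x hx y hy hxy
    have h1 := lower_bound (hcw n a) (C := 1) (s := l n a / C) (R := R)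
      (fun x => (hup n a x).trans (pow_le_one₀ hq.le hq1.le)) (div_pos (hl0 n a) hC0)
      (fun z hz => by rw [div_le_iff₀ hC0, mul_comm, hl]; exact hdist n a 0 h0K z hz)
      (hXR y hy) (hXR x hx)
    have h2 : min c₁ 1 ≤ min ‖x - y‖ 1 := min_le_min_right _ hxy
    have h3 : min c₁ 1 * (l n a / C) ≤ min ‖x - y‖ 1 * (l n a / C) := by
      have := hl0 n a
      gcongr
    have h4 : κ * l n a = min c₁ 1 * (l n a / C) / 2 := by rw [hκ]; field_simp
    rw [h4]; linarith
  -- comparison of sizes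
  have hladd : ∀ n k a, l (n + k) a = ‖fderiv ℝ (wordMap φ n a) (wordMap φ k (fun j => a (j + n)) 0)‖ *
      ‖fderiv ℝ (wordMap φ k (fun j => a (j + n))) 0‖ := fun n k a => by
    rw [hl, wordMap_add]; exact ((hcw n a).comp (hcw k _)).2 0
  have hl_up : ∀ n k a, l (n + k) a ≤ C * q ^ k * l n a := by
    intro n k a
    rw [hladd]
    have h1 := hdist n a _ (hKw k (fun j => a (j + n)) 0 h0K) 0 h0K
    have h2 := hup k (fun j => a (j + n)) 0
    rw [← hl] at h1
    calc _ ≤ (C * l n a) * q ^ k := by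
          have := hl0 n a
          gcongr
      _ = _ := by ring
  have hl_lo : ∀ n k a, m ^ k / C * l n a ≤ l (n + k) a := by
    intro n k a
    rw [hladd]
    have h1 := hdist n a 0 h0K _ (hKw k (fun j => a (j + n)) 0 h0K)
    have h2 := hlo k (fun j => a (j + n)) 0 h0K
    rw [← hl] at h1
    calc m ^ k / C * l n a = (l n a / C) * m ^ k := by ring
      _ ≤ _ := by
        gcongr
        rw [div_le_iff₀ hC0]; linarith
  -- diameter bounds
  have hcyl : ∀ {b a} (n : ℕ), a ∈ cylSet Ab b → (fun j => a (j + n)) ∈ cylSet Ab fun j => b (j + n) :=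
    fun n ha j => ha (j + n)
  have hbd : ∀ n a b, Bornology.IsBounded (wordMap φ n a '' (codingMap '' cylSet Ab b)) := by
    intro n a b
    refine ((hXc.image (hcw n a).1.continuous).isBounded).subset (Set.image_mono ?_)
    rintro _ ⟨u, -, rfl⟩; exact hcmX u
  have hdiam_up : ∀ n a b, Metric.diam (wordMap φ n a '' (codingMap '' cylSet Ab b)) ≤
      C * l n a * (2 * R) := by
    intro n a b
    refine Metric.diam_le_of_forall_dist_le (by have := hl0 n a; positivity) ?_
    rintro _ ⟨_, ⟨u, -, rfl⟩, rfl⟩ _ ⟨_, ⟨v, -, rfl⟩, rfl⟩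
    rw [dist_eq_norm]; exact hupper n a _ (hcmX u) _ (hcmX v)
  have hdiam_lo : ∀ n a b, κ * l n a ≤ Metric.diam (wordMap φ n a '' (codingMap '' cylSet Ab b)) := by
    intro n a b
    obtain ⟨u, hu, v, hv, huv⟩ := exists_pair hAb b
    refine (hlower n a _ (hcmX u) _ (hcmX v) (hsepc hu hv huv)).trans ?_
    rw [← dist_eq_norm]
    exact Metric.dist_le_diam_of_mem (hbd n a b) ⟨_, ⟨u, hu, rfl⟩, rfl⟩ ⟨_, ⟨v, hv, rfl⟩, rfl⟩
  -- choice of k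
  obtain ⟨k, hk1, hk⟩ : ∃ k : ℕ, 1 ≤ k ∧ C * (C * q ^ k * (2 / κ)) * (2 * R) ≤ 1 := by
    have ht : Tendsto (fun k : ℕ => C * (C * q ^ k * (2 / κ)) * (2 * R)) atTop
        (𝓝 (C * (C * 0 * (2 / κ)) * (2 * R))) :=
      ((((tendsto_pow_atTop_nhds_zero_of_lt_one hq.le hq1).const_mul C).mul_const _).const_mul C).mul_const _
    simp only [mul_zero, zero_mul] at ht
    obtain ⟨k, h1, h2⟩ := ((eventually_ge_atTop 1).and (ht.eventually (gt_mem_nhds one_pos))).exists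
    exact ⟨k, h1, h2.le⟩
  set cl := 2 * m / (C * c₁) with hcl
  have hcl0 : 0 < cl := by positivity
  have hmk : 0 < m ^ k := by positivity
  set D := 1 + C * (2 / κ) * (2 * R) + 1 / (κ * cl) + 1 / (κ * (m ^ k / C * cl)) with hD
  have p1 : 0 < C * (2 / κ) * (2 * R) := by positivity
  have p2 : 0 < 1 / (κ * cl) := by positivity
  have p3 : 0 < 1 / (κ * (m ^ k / C * cl)) := by positivity
  have hD1 : 1 ≤ D := by rw [hD]; linarith
  have hD0 : 0 < D := by linarith
  refine ⟨k, D, hD1, ?_⟩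
  rintro b r hr hrc x ⟨a, ha, rfl⟩
  have hex : ∃ n, 1 ≤ n ∧ κ * l n a ≤ 2 * r := by
    have ht : Tendsto (fun n : ℕ => κ * q ^ n) atTop (𝓝 (κ * 0)) :=
      (tendsto_pow_atTop_nhds_zero_of_lt_one hq.le hq1).const_mul κ
    rw [mul_zero] at ht
    obtain ⟨n, h1, h2⟩ := ((eventually_ge_atTop 1).and
      (ht.eventually (gt_mem_nhds (show 0 < 2 * r by linarith)))).exists
    refine ⟨n, h1, le_trans ?_ h2.le⟩
    have := hup n a 0
    rw [← hl] at this
    gcongr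
  classical
  set N := Nat.find hex with hN
  obtain ⟨hN1, hNr⟩ := Nat.find_spec hex
  rw [← hN] at hN1 hNr
  have hNmin : ∀ j, 1 ≤ j → j < N → 2 * r < κ * l j a := by
    intro j h1 h2
    have := Nat.find_min hex h2
    by_contra h
    exact this ⟨h1, not_lt.1 h⟩
  have hlN_up : l N a ≤ 2 / κ * r := by
    rw [div_mul_eq_mul_div, le_div_iff₀ hκ0]; linarith
  have hlN_lo : cl * r ≤ l N a := by
    have e : cl * r = m / C * (2 * r / c₁) := by rw [hcl]; field_simp
    have hfr : 2 * r / c₁ ≤ 1 := by rw [div_le_one hc₁]; linarith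
    rcases Nat.lt_or_ge 1 N with h | h
    · have h1 := hNmin (N - 1) (by omega) (by omega)
      have h2 := hl_lo (N - 1) 1 a
      rw [Nat.sub_add_cancel hN1, pow_one] at h2
      refine le_trans ?_ h2
      rw [e]
      gcongr
      rw [div_le_iff₀ hc₁]
      have := hl0 (N - 1) a
      nlinarith
    · have hN' : N = 1 := by omega
      have h2 := hlo 1 a 0 h0K
      rw [← hl, pow_one] at h2
      rw [hN', e]
      refine le_trans ?_ h2
      have h3 : m / C ≤ m := div_le_self hm.le hC
      have h4 : 0 ≤ 2 * r / c₁ := by positivity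
      nlinarith
  have hl2_up := hl_up N k a
  have hl2_lo := hl_lo N k a
  have hq1k : q ^ k ≤ 1 := pow_le_one₀ hq.le hq1.le
  have hd2 : C * l (N + k) a * (2 * R) ≤ r := by
    calc C * l (N + k) a * (2 * R) ≤ C * (C * q ^ k * (2 / κ * r)) * (2 * R) := by
          gcongr
          exact hl2_up.trans (by gcongr)
      _ = (C * (C * q ^ k * (2 / κ)) * (2 * R)) * r := by ring
      _ ≤ 1 * r := by gcongr
      _ = r := one_mul r
  have hinv : ∀ c : ℝ, 0 < c → 1 / c ≤ D → r / D ≤ c * r := by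
    intro c hc h
    rw [div_le_iff₀ hD0]
    rw [div_le_iff₀ hc] at h
    nlinarith
  refine ⟨a, ha, N, N + k, hN1, by omega, by omega, ⟨?_, ?_⟩, ⟨?_, ?_⟩, ?_, ?_⟩
  · refine le_trans ?_ (hdiam_lo N a _)
    refine (hinv (κ * cl) (by positivity) (by rw [hD]; linarith)).trans ?_
    rw [mul_assoc]; gcongr
  · refine (hdiam_up N a _).trans ?_
    calc C * l N a * (2 * R) ≤ C * (2 / κ * r) * (2 * R) := by gcongr
      _ = (C * (2 / κ) * (2 * R)) * r := by ring
      _ ≤ D * r := by gcongr; rw [hD]; linarith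
  · refine le_trans ?_ (hdiam_lo (N + k) a _)
    refine (hinv (κ * (m ^ k / C * cl)) (by positivity) (by rw [hD]; linarith)).trans ?_
    rw [mul_assoc, mul_assoc]
    gcongr
    refine le_trans ?_ hl2_lo
    gcongr
  · refine ((hdiam_up (N + k) a _).trans hd2).trans ?_
    nlinarith
  · rintro _ ⟨hy, a', ha', rfl⟩
    rw [mem_closedBall, dist_eq_norm] at hy
    have hagree : ∀ j < N, a j = a' j := by
      by_contra! hcon
      have hspec := Nat.find_spec hcon
      have hmin := fun i (h : i < Nat.find hcon) => Nat.find_min hcon h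
      set j := Nat.find hcon
      have hpre : ∀ i < j, a i = a' i := by
        intro i hi
        by_contra h
        exact hmin i hi ⟨hi.trans hspec.1, h⟩
      have hsj := hsepc (hcyl j ha') (hcyl j ha) (by simpa using hspec.2.symm)
      rcases Nat.eq_zero_or_pos j with hj | hj
      · rw [hj] at hsj
        simp only [add_zero] at hsj
        linarith
      · have h1 := hlower j a _ (hcmX _) _ (hcmX _) hsj
        rw [← hshift j a, wordMap_congr φ j hpre, ← hshift j a'] at h1
        linarith [hNmin j hj hspec.1]
    refine ⟨_, ⟨_, hcyl N ha', rfl⟩, ?_⟩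
    rw [wordMap_congr φ N hagree, ← hshift N a']
  · rintro _ ⟨_, ⟨u, -, rfl⟩, rfl⟩
    rw [mem_closedBall, dist_eq_norm]
    rw [hshift (N + k) a]
    exact (hupper (N + k) a _ (hcmX _) _ (hcmX _)).trans hd2
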